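/- arXiv:1405.5318 — 2 statements merged into one kernel-verified Lean document; each statement's English description precedes it below -/
import Mathlib

section
/- For every τ in the complex upper half-plane at which ζ(τ) ∉ {0, 1, −1, −2, −1/2}, the logarithmic derivative of φ5 satisfies φ5′(τ)/φ5(τ) = [(ζ²+ζ+1)²/(3(2ζ+1)ζ(ζ+1)(ζ−1)(ζ+2))]·ζ′(τ), where ζ = ζ(τ) and ′ denotes d/dτ. -/
open Complex

/-- The theta product θ(x;p) = ∏_{j≥0} (1 - pʲx)(1 - pʲ⁺¹x⁻¹). -/
noncomputable def jtheta (x p : ℂ) : ℂ :=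
  ∏' j : ℕ, ((1 - p ^ j * x) * (1 - p ^ (j + 1) * x⁻¹))

/-- Dedekind's eta function η(τ) = e^{πiτ/12} ∏_{j≥1} (1 - e^{2πijτ}). -/
noncomputable def dedekindEta (τ : ℂ) : ℂ :=
  Complex.exp ((Real.pi : ℂ) * Complex.I * τ / 12) *
    ∏' j : ℕ, (1 - Complex.exp (2 * (Real.pi : ℂ) * Complex.I * (j + 1) * τ))

/-- The eta quotient φ₁ = η(τ/2)²/η(τ)². -/
noncomputable def phi1 (τ : ℂ) : ℂ := dedekindEta (τ / 2) ^ 2 / dedekindEta τ ^ 2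

/-- The eta quotient φ₂ = η(2τ)²/η(τ)². -/
noncomputable def phi2 (τ : ℂ) : ℂ := dedekindEta (2 * τ) ^ 2 / dedekindEta τ ^ 2

/-- The eta quotient φ₃ = η(3τ/2)/η(τ/2). -/
noncomputable def phi3 (τ : ℂ) : ℂ := dedekindEta (3 * τ / 2) / dedekindEta (τ / 2)

/-- The eta quotient φ₄ = η(6τ)/η(2τ). -/
noncomputable def phi4 (τ : ℂ) : ℂ := dedekindEta (6 * τ) / dedekindEta (2 * τ)

/-- The eta quotient φ₅ = η(3τ)/η(τ). -/
noncomputable def phi5 (τ : ℂ) : ℂ := dedekindEta (3 * τ) / dedekindEta τ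

/-- The Hauptmodul ζ(τ) = ω²θ(-1;p²)θ(-pω;p²)/(θ(-p;p²)θ(-ω;p²)),
with p = e^{πiτ} and ω = e^{2πi/3}. -/
noncomputable def hauptmodul (τ : ℂ) : ℂ :=
  let p := Complex.exp ((Real.pi : ℂ) * Complex.I * τ)
  let ω := Complex.exp (2 * (Real.pi : ℂ) * Complex.I / 3)
  ω ^ 2 * jtheta (-1) (p ^ 2) * jtheta (-(p * ω)) (p ^ 2)
    / (jtheta (-p) (p ^ 2) * jtheta (-ω) (p ^ 2))

/-!
By the Jacobi triple product and the splitting of `ℤ²` according to the parity of the coordinate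
sum, `x⁻¹ θ(xy) θ(x/y)` is, up to a constant, a determinant `f(x) g(y) - g(x) f(y)`. The Plücker
relation for such determinants is the three-term relation of theta functions, and it specializes to
duplication formulas expressing `ϑᵢ(x)² ϑⱼ(x)²` linearly in the theta functions at `x²`. At a
primitive cube root of unity `ω` we have `ω² = ω⁻¹`, so these formulas turn into factorizations of
`ζ - 1`, `ζ + 1`, `ζ + 2` and `2ζ + 1` as theta quotients. Since `p ϑ₁(ω)⁶ = -27 φ₅⁶`, they combine
to `(ζ - 1)(ζ + 2)(2ζ + 1) = 27 φ₅⁶ ζ(ζ + 1)`, whose logarithmic derivative is the claim.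
-/

open Filter Finset
open scoped Real Topology

section CubeRoot

variable {w : ℂ}

lemma inv_eq_sq_of_sq_add_self_add_one (hw : w ^ 2 + w + 1 = 0) : w⁻¹ = w ^ 2 :=
  inv_eq_of_mul_eq_one_right (by linear_combination (w - 1) * hw)

lemma ne_zero_of_sq_add_self_add_one (hw : w ^ 2 + w + 1 = 0) : w ≠ 0 := by
  rintro rfl
  simp at hw

lemma one_sub_pow_six_of_sq_add_self_add_one (hw : w ^ 2 + w + 1 = 0) : (1 - w) ^ 6 = -27 := by
  have hsq : (1 - w) ^ 2 = -3 * w := by linear_combination hw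
  rw [show (1 - w) ^ 6 = ((1 - w) ^ 2) ^ 3 by ring, hsq]
  linear_combination -27 * (w - 1) * hw

end CubeRoot

section QPochhammer

variable {q : ℂ}

/-- The infinite `q`-shifted factorial `(x; q)_∞`, in which both `θ(x; p)` and `η` factor. -/
noncomputable def qPochhammer (q x : ℂ) : ℂ := ∏' j : ℕ, (1 - q ^ j * x)

lemma norm_pow_lt_one_of_norm_lt_one (hq : ‖q‖ < 1) {n : ℕ} (hn : n ≠ 0) : ‖q ^ n‖ < 1 := by
  rw [norm_pow]
  exact pow_lt_one₀ (norm_nonneg _) hq hn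

lemma one_sub_pow_succ_ne_zero (hq : ‖q‖ < 1) (n : ℕ) : 1 - q ^ (n + 1) ≠ 0 := by
  refine sub_ne_zero.mpr fun h => ?_
  simpa [← h] using norm_pow_lt_one_of_norm_lt_one hq n.succ_ne_zero

lemma summable_norm_neg_pow_mul (hq : ‖q‖ < 1) (x : ℂ) :
    Summable fun j : ℕ => ‖-(q ^ j * x)‖ := by
  simp only [norm_neg, norm_mul, norm_pow]
  exact (summable_geometric_of_lt_one (norm_nonneg _) hq).mul_right _

lemma multipliable_one_sub_pow_mul (hq : ‖q‖ < 1) (x : ℂ) :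
    Multipliable fun j : ℕ => 1 - q ^ j * x := by
  simpa [sub_eq_add_neg] using multipliable_one_add_of_summable (summable_norm_neg_pow_mul hq x)

lemma qPochhammer_self (q : ℂ) : qPochhammer q q = ∏' j : ℕ, (1 - q ^ (j + 1)) := by
  simp only [qPochhammer, pow_succ]

lemma qPochhammer_self_ne_zero (hq : ‖q‖ < 1) : qPochhammer q q ≠ 0 := by
  have hfactor (j : ℕ) : 1 + -(q ^ j * q) ≠ 0 := by
    simpa [pow_succ, sub_eq_add_neg] using one_sub_pow_succ_ne_zero hq j
  simpa [qPochhammer, sub_eq_add_neg] using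
    tprod_one_add_ne_zero_of_summable hfactor (summable_norm_neg_pow_mul hq q)

lemma qPochhammer_eq_one_sub_mul (hq : ‖q‖ < 1) (x : ℂ) :
    qPochhammer q x = (1 - x) * qPochhammer q (q * x) := by
  have hshift (j : ℕ) : 1 - q ^ j * (q * x) = 1 - q ^ (j + 1) * x := by ring
  have hmul := multipliable_one_sub_pow_mul hq (q * x)
  simp only [hshift] at hmul
  simp only [qPochhammer, hshift, tprod_eq_zero_mul' (f := fun j : ℕ => 1 - q ^ j * x) hmul,
    pow_zero, one_mul]

lemma qPochhammer_sq_mul_qPochhammer_sq (hq : ‖q‖ < 1) (x : ℂ) :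
    qPochhammer (q ^ 2) x * qPochhammer (q ^ 2) (q * x) = qPochhammer q x := by
  have hq2 := norm_pow_lt_one_of_norm_lt_one hq two_ne_zero
  have heven (j : ℕ) : 1 - (q ^ 2) ^ j * x = 1 - q ^ (2 * j) * x := by ring
  have hodd (j : ℕ) : 1 - (q ^ 2) ^ j * (q * x) = 1 - q ^ (2 * j + 1) * x := by ring
  have hmul_even := multipliable_one_sub_pow_mul hq2 x
  have hmul_odd := multipliable_one_sub_pow_mul hq2 (q * x)
  simp only [heven, hodd] at hmul_even hmul_odd
  simp only [qPochhammer, heven, hodd]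
  exact tprod_even_mul_odd (f := fun j : ℕ => 1 - q ^ j * x) hmul_even hmul_odd

lemma qPochhammer_mul_neg (hq : ‖q‖ < 1) (x : ℂ) :
    qPochhammer q x * qPochhammer q (-x) = qPochhammer (q ^ 2) (x ^ 2) := by
  unfold qPochhammer
  rw [← (multipliable_one_sub_pow_mul hq x).tprod_mul (multipliable_one_sub_pow_mul hq (-x))]
  exact tprod_congr fun j => by ring

lemma qPochhammer_mul_cubeRoots {w : ℂ} (hq : ‖q‖ < 1) (hw : w ^ 2 + w + 1 = 0) (x : ℂ) :
    qPochhammer q x * qPochhammer q (w * x) * qPochhammer q (w ^ 2 * x) =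
      qPochhammer (q ^ 3) (x ^ 3) := by
  have hmul := multipliable_one_sub_pow_mul hq
  have hfactor (y : ℂ) : (1 - y) * (1 - w * y) * (1 - w ^ 2 * y) = 1 - y ^ 3 := by
    linear_combination (-y + w * y ^ 2 - (w - 1) * y ^ 3) * hw
  unfold qPochhammer
  rw [← (hmul x).tprod_mul (hmul (w * x)), ← ((hmul x).mul (hmul (w * x))).tprod_mul
    (hmul (w ^ 2 * x))]
  refine tprod_congr fun j => ?_
  linear_combination hfactor (q ^ j * x)

-- Euler's `(-q; q)_∞ (q; q²)_∞ = 1` at `q = p²`, with `(p²; p⁴)_∞ = (p; p²)_∞ (-p; p²)_∞`.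
lemma qPochhammer_mul_qPochhammer_neg_mul_qPochhammer_neg_sq {p : ℂ} (hp : ‖p‖ < 1) :
    qPochhammer (p ^ 2) p * qPochhammer (p ^ 2) (-p) * qPochhammer (p ^ 2) (-p ^ 2) = 1 := by
  have hq := norm_pow_lt_one_of_norm_lt_one hp two_ne_zero
  refine mul_left_cancel₀ (qPochhammer_self_ne_zero hq) ?_
  have hsplit := qPochhammer_sq_mul_qPochhammer_sq hq (p ^ 2)
  rw [← sq (p ^ 2), ← qPochhammer_mul_neg hq (p ^ 2), ← qPochhammer_mul_neg hq p] at hsplit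
  linear_combination hsplit

end QPochhammer

section JTheta

variable {q x : ℂ}

lemma multipliable_jtheta (hq : ‖q‖ < 1) (x : ℂ) :
    Multipliable fun j : ℕ => (1 - q ^ j * x) * (1 - q ^ (j + 1) * x⁻¹) := by
  simpa only [pow_succ, mul_assoc] using
    (multipliable_one_sub_pow_mul hq x).mul (multipliable_one_sub_pow_mul hq (q * x⁻¹))

lemma jtheta_eq_qPochhammer_mul (hq : ‖q‖ < 1) (x : ℂ) :
    jtheta x q = qPochhammer q x * qPochhammer q (q * x⁻¹) := by
  unfold jtheta qPochhammer
  rw [← (multipliable_one_sub_pow_mul hq x).tprod_mul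
    (multipliable_one_sub_pow_mul hq (q * x⁻¹))]
  exact tprod_congr fun j => by ring

lemma jtheta_inv (hq : ‖q‖ < 1) (hx : x ≠ 0) : jtheta x⁻¹ q = -(x⁻¹ * jtheta x q) := by
  rw [jtheta_eq_qPochhammer_mul hq, jtheta_eq_qPochhammer_mul hq, qPochhammer_eq_one_sub_mul hq x,
    qPochhammer_eq_one_sub_mul hq x⁻¹, inv_inv]
  field_simp
  ring

lemma jtheta_div (hq : ‖q‖ < 1) (hq0 : q ≠ 0) (x : ℂ) : jtheta (q / x) q = jtheta x q := by
  rw [jtheta_eq_qPochhammer_mul hq, jtheta_eq_qPochhammer_mul hq, mul_comm, inv_div,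
    mul_div_cancel₀ x hq0, div_eq_mul_inv]

lemma jtheta_mul_left (hq : ‖q‖ < 1) (hq0 : q ≠ 0) (hx : x ≠ 0) :
    jtheta (q * x) q = -(x⁻¹ * jtheta x q) := by
  rw [← jtheta_inv hq hx, ← jtheta_div hq hq0 x⁻¹, div_inv_eq_mul]

lemma jtheta_mul_jtheta_neg (hq : ‖q‖ < 1) (x : ℂ) :
    jtheta x q * jtheta (-x) q = jtheta (x ^ 2) (q ^ 2) := by
  have hq2 := norm_pow_lt_one_of_norm_lt_one hq two_ne_zero
  rw [jtheta_eq_qPochhammer_mul hq, jtheta_eq_qPochhammer_mul hq, jtheta_eq_qPochhammer_mul hq2,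
    ← inv_pow, ← mul_pow, ← qPochhammer_mul_neg hq x, ← qPochhammer_mul_neg hq (q * x⁻¹),
    inv_neg, mul_neg]
  ring

lemma jtheta_sq_mul_jtheta_sq (hq : ‖q‖ < 1) (hq0 : q ≠ 0) (x : ℂ) :
    jtheta x (q ^ 2) * jtheta (q * x) (q ^ 2) = jtheta x q := by
  have hq2 := norm_pow_lt_one_of_norm_lt_one hq two_ne_zero
  have hinv : q ^ 2 * (q * x)⁻¹ = q * x⁻¹ := by field_simp
  rw [jtheta_eq_qPochhammer_mul hq2, jtheta_eq_qPochhammer_mul hq2, jtheta_eq_qPochhammer_mul hq,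
    hinv, ← qPochhammer_sq_mul_qPochhammer_sq hq x,
    ← qPochhammer_sq_mul_qPochhammer_sq hq (q * x⁻¹), ← mul_assoc q q, ← sq]
  ring

lemma jtheta_cubeRoot_mul_qPochhammer {w : ℂ} (hq : ‖q‖ < 1) (hw : w ^ 2 + w + 1 = 0) :
    jtheta w q * qPochhammer q q = (1 - w) * qPochhammer (q ^ 3) (q ^ 3) := by
  rw [← qPochhammer_mul_cubeRoots hq hw, jtheta_eq_qPochhammer_mul hq,
    qPochhammer_eq_one_sub_mul hq w, inv_eq_sq_of_sq_add_self_add_one hw, mul_comm q, mul_comm q]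
  ring

end JTheta

section TripleProduct

variable {q x : ℂ}

/-- The finite `q`-factorial `(q; q)_n`. -/
noncomputable def qFactorial (q : ℂ) (n : ℕ) : ℂ := ∏ j ∈ range n, (1 - q ^ (j + 1))

/-- The reciprocal `1 / (q; q)_m`, extended by zero to negative `m` as for `1 / Γ`, so that its
recurrence holds for all integers. -/
noncomputable def qFactorialInv (q : ℂ) (m : ℤ) : ℂ :=
  if 0 ≤ m then (qFactorial q m.toNat)⁻¹ else 0

/-- The Gaussian binomial coefficient `[a + b choose b + n]_q`, vanishing for `n ∉ [-b, a]`. -/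
noncomputable def centeredGaussBinom (q : ℂ) (a b : ℕ) (n : ℤ) : ℂ :=
  qFactorial q (a + b) * qFactorialInv q (a - n) * qFactorialInv q (b + n)

lemma qFactorial_succ (q : ℂ) (n : ℕ) :
    qFactorial q (n + 1) = qFactorial q n * (1 - q ^ (n + 1)) :=
  prod_range_succ _ n

lemma qFactorialInv_natCast (q : ℂ) (n : ℕ) : qFactorialInv q n = (qFactorial q n)⁻¹ := by
  simp [qFactorialInv]

lemma qFactorialInv_of_neg {m : ℤ} (hm : m < 0) (q : ℂ) : qFactorialInv q m = 0 :=
  if_neg (not_le.mpr hm)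

lemma qFactorialInv_sub_one (hq : ‖q‖ < 1) (m : ℤ) :
    qFactorialInv q (m - 1) = (1 - q ^ m) * qFactorialInv q m := by
  rcases lt_trichotomy m 0 with hm | rfl | hm
  · rw [qFactorialInv_of_neg hm, qFactorialInv_of_neg (by lia), mul_zero]
  · rw [qFactorialInv_of_neg (by lia), zpow_zero, sub_self, zero_mul]
  · obtain ⟨n, rfl⟩ : ∃ n : ℕ, m = (n + 1 : ℕ) := ⟨(m - 1).toNat, by lia⟩
    have hfactor := one_sub_pow_succ_ne_zero hq n
    rw [qFactorialInv_natCast, qFactorial_succ, zpow_natCast, Nat.cast_succ, add_sub_cancel_right,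
      qFactorialInv_natCast, mul_inv, mul_left_comm, mul_inv_cancel₀ hfactor, mul_one]

lemma centeredGaussBinom_succ_left (hq : ‖q‖ < 1) (hq0 : q ≠ 0) (a b : ℕ) (n : ℤ) :
    centeredGaussBinom q (a + 1) b n =
      centeredGaussBinom q a b n + q ^ (a + 1 - n) * centeredGaussBinom q a b (n - 1) := by
  have hleft := qFactorialInv_sub_one hq (a + 1 - n)
  have hright := qFactorialInv_sub_one hq (b + n)
  have hpow : q ^ (a + b + 1) = q ^ (a + 1 - n) * q ^ (b + n) := by
    rw [← zpow_add₀ hq0, ← zpow_natCast]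
    congr 1
    push_cast
    ring
  simp only [centeredGaussBinom, Nat.cast_succ, show a + 1 + b = a + b + 1 by ring,
    qFactorial_succ, hpow, show (a : ℤ) - n = a + 1 - n - 1 by ring, hleft,
    show (a : ℤ) - (n - 1) = a + 1 - n by ring, show (b : ℤ) + (n - 1) = b + n - 1 by ring, hright]
  ring

lemma centeredGaussBinom_succ_right (hq : ‖q‖ < 1) (hq0 : q ≠ 0) (a b : ℕ) (n : ℤ) :
    centeredGaussBinom q a (b + 1) n =
      centeredGaussBinom q a b n + q ^ (b + 1 + n) * centeredGaussBinom q a b (n + 1) := by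
  have hleft := qFactorialInv_sub_one hq (a - n)
  have hright := qFactorialInv_sub_one hq (b + 1 + n)
  have hpow : q ^ (a + b + 1) = q ^ (a - n) * q ^ (b + 1 + n) := by
    rw [← zpow_add₀ hq0, ← zpow_natCast]
    congr 1
    push_cast
    ring
  simp only [centeredGaussBinom, Nat.cast_succ, ← add_assoc a b 1, qFactorial_succ, hpow,
    show (b : ℤ) + n = b + 1 + n - 1 by ring, hright, show (b : ℤ) + (n + 1) = b + 1 + n by ring,
    show (a : ℤ) - (n + 1) = a - n - 1 by ring, hleft]
  ring

lemma hasSum_centeredGaussBinom_zero_zero (q : ℂ) (g : ℤ → ℂ) :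
    HasSum (fun n : ℤ => centeredGaussBinom q 0 0 n * g n) (g 0) := by
  have hzero : centeredGaussBinom q 0 0 0 * g 0 = g 0 := by
    simp [centeredGaussBinom, qFactorialInv, qFactorial]
  refine hzero ▸ hasSum_single 0 fun n hn => ?_
  rcases hn.lt_or_gt with hn | hn
  · simp [centeredGaussBinom, qFactorialInv_of_neg hn]
  · simp [centeredGaussBinom, qFactorialInv_of_neg (neg_lt_zero.mpr hn)]

lemma hasSum_centeredGaussBinom_succ_left {g : ℤ → ℂ} (hq : ‖q‖ < 1) (hq0 : q ≠ 0)
    (hg : ∀ n, g (n + 1) = -(x * q ^ n * g n)) {a b : ℕ} {S : ℂ}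
    (hS : HasSum (fun n => centeredGaussBinom q a b n * g n) S) :
    HasSum (fun n => centeredGaussBinom q (a + 1) b n * g n) (S * (1 - q ^ a * x)) := by
  have hshift := hS.mul_left (-(q ^ a * x))
  rw [← (Equiv.subRight (1 : ℤ)).hasSum_iff] at hshift
  convert hS.add hshift using 1
  · ext n
    have hprev : x * g (n - 1) = -(q ^ (1 - n) * g n) := by
      have hpow : q ^ (1 - n) * q ^ (n - 1) = 1 := by
        rw [← zpow_add₀ hq0, sub_add_sub_cancel, sub_self, zpow_zero]
      have hg_pred := hg (n - 1)
      rw [sub_add_cancel] at hg_pred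
      linear_combination q ^ (1 - n) * hg_pred - x * g (n - 1) * hpow
    have hpow : q ^ ((a : ℤ) + 1 - n) = q ^ a * q ^ (1 - n) := by
      rw [add_sub_assoc, zpow_add₀ hq0, zpow_natCast]
    rw [centeredGaussBinom_succ_left hq hq0, hpow, Function.comp_apply, Equiv.subRight_apply]
    linear_combination q ^ a * centeredGaussBinom q a b (n - 1) * hprev
  · ring

lemma hasSum_centeredGaussBinom_succ_right {g : ℤ → ℂ} (hq : ‖q‖ < 1) (hq0 : q ≠ 0) (hx : x ≠ 0)
    (hg : ∀ n, g (n + 1) = -(x * q ^ n * g n)) {a b : ℕ} {S : ℂ}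
    (hS : HasSum (fun n => centeredGaussBinom q a b n * g n) S) :
    HasSum (fun n => centeredGaussBinom q a (b + 1) n * g n) (S * (1 - q ^ (b + 1) * x⁻¹)) := by
  have hshift := hS.mul_left (-(q ^ (b + 1) * x⁻¹))
  rw [← (Equiv.addRight (1 : ℤ)).hasSum_iff] at hshift
  convert hS.add hshift using 1
  · ext n
    have hnext : x⁻¹ * g (n + 1) = -(q ^ n * g n) := by
      rw [hg n]
      field_simp
    have hpow : q ^ ((b : ℤ) + 1 + n) = q ^ (b + 1) * q ^ n := by
      rw [zpow_add₀ hq0, ← Nat.cast_succ, zpow_natCast]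
    rw [centeredGaussBinom_succ_right hq hq0, hpow, Function.comp_apply, Equiv.coe_addRight]
    linear_combination q ^ (b + 1) * centeredGaussBinom q a b (n + 1) * hnext
  · ring

lemma hasSum_centeredGaussBinom_mul {g : ℤ → ℂ} (hq : ‖q‖ < 1) (hq0 : q ≠ 0) (hx : x ≠ 0)
    (hg : ∀ n, g (n + 1) = -(x * q ^ n * g n)) (N : ℕ) :
    HasSum (fun n => centeredGaussBinom q N N n * g n)
      (g 0 * ∏ j ∈ range N, (1 - q ^ j * x) * (1 - q ^ (j + 1) * x⁻¹)) := by
  induction N with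
  | zero => simpa using hasSum_centeredGaussBinom_zero_zero q g
  | succ N ih =>
    rw [prod_range_succ, ← mul_assoc, ← mul_assoc]
    exact hasSum_centeredGaussBinom_succ_right hq hq0 hx hg
      (hasSum_centeredGaussBinom_succ_left hq hq0 hg ih)

lemma tendsto_qFactorial (hq : ‖q‖ < 1) :
    Tendsto (qFactorial q) atTop (𝓝 (qPochhammer q q)) := by
  refine (multipliable_one_sub_pow_mul hq q).hasProd.tendsto_prod_nat.congr fun n => ?_
  simp only [qFactorial, pow_succ]

lemma tendsto_qFactorialInv (hq : ‖q‖ < 1) :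
    Tendsto (qFactorialInv q) atTop (𝓝 (qPochhammer q q)⁻¹) := by
  have htoNat : Tendsto Int.toNat atTop atTop :=
    tendsto_atTop_atTop.mpr fun n => ⟨n, fun m hm => by lia⟩
  refine (((tendsto_qFactorial hq).inv₀ (qPochhammer_self_ne_zero hq)).comp htoNat).congr' ?_
  filter_upwards [eventually_ge_atTop 0] with m hm
  simp [qFactorialInv, hm]

lemma tendsto_centeredGaussBinom (hq : ‖q‖ < 1) (n : ℤ) :
    Tendsto (fun N : ℕ => centeredGaussBinom q N N n) atTop (𝓝 (qPochhammer q q)⁻¹) := by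
  have hcast : Tendsto (fun N : ℕ => (N : ℤ)) atTop atTop := tendsto_natCast_atTop_atTop
  have hdouble : Tendsto (fun N : ℕ => N + N) atTop atTop := tendsto_id.atTop_add_atTop tendsto_id
  have hlim := (((tendsto_qFactorial hq).comp hdouble).mul
    ((tendsto_qFactorialInv hq).comp (tendsto_atTop_add_const_right _ (-n) hcast))).mul
    ((tendsto_qFactorialInv hq).comp (tendsto_atTop_add_const_right _ n hcast))
  rwa [mul_inv_cancel₀ (qPochhammer_self_ne_zero hq), one_mul] at hlim

lemma exists_norm_qFactorialInv_le (hq : ‖q‖ < 1) : ∃ C, ∀ m, ‖qFactorialInv q m‖ ≤ C := by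
  obtain ⟨C, hC⟩ :=
    ((tendsto_qFactorial hq).inv₀ (qPochhammer_self_ne_zero hq)).norm.bddAbove_range
  have hC (n : ℕ) : ‖(qFactorial q n)⁻¹‖ ≤ C := hC ⟨n, rfl⟩
  refine ⟨C, fun m => ?_⟩
  rcases lt_or_ge m 0 with hm | hm
  · rw [qFactorialInv_of_neg hm, norm_zero]
    exact (norm_nonneg _).trans (hC 0)
  · lift m to ℕ using hm
    exact qFactorialInv_natCast q m ▸ hC m

lemma exists_norm_centeredGaussBinom_le (hq : ‖q‖ < 1) :
    ∃ C, ∀ a b n, ‖centeredGaussBinom q a b n‖ ≤ C := by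
  obtain ⟨C, hC⟩ := exists_norm_qFactorialInv_le hq
  obtain ⟨D, hD⟩ := (tendsto_qFactorial hq).norm.bddAbove_range
  have hD (n : ℕ) : ‖qFactorial q n‖ ≤ D := hD ⟨n, rfl⟩
  have hC0 : 0 ≤ C := (norm_nonneg _).trans (hC 0)
  have hD0 : 0 ≤ D := (norm_nonneg _).trans (hD 0)
  refine ⟨D * C * C, fun a b n => ?_⟩
  rw [centeredGaussBinom, norm_mul, norm_mul]
  gcongr
  exacts [hD _, hC _, hC _]

lemma qPochhammer_mul_jtheta_eq_tsum {g : ℤ → ℂ} (hq : ‖q‖ < 1) (hq0 : q ≠ 0) (hx : x ≠ 0)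
    (hg : ∀ n, g (n + 1) = -(x * q ^ n * g n)) (hsum : Summable g) :
    qPochhammer q q * (g 0 * jtheta x q) = ∑' n, g n := by
  obtain ⟨C, hC⟩ := exists_norm_centeredGaussBinom_le hq
  have hsum_lim : Tendsto (fun N : ℕ => ∑' n, centeredGaussBinom q N N n * g n) atTop
      (𝓝 (∑' n, (qPochhammer q q)⁻¹ * g n)) := by
    refine tendsto_tsum_of_dominated_convergence (hsum.norm.mul_left C)
      (fun n => (tendsto_centeredGaussBinom hq n).mul_const _) (.of_forall fun N n => ?_)
    rw [norm_mul]
    gcongr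
    exact hC N N n
  have hprod_lim := (multipliable_jtheta hq x).hasProd.tendsto_prod_nat.const_mul (g 0)
  have hlim := tendsto_nhds_unique hprod_lim
    (hsum_lim.congr fun N => (hasSum_centeredGaussBinom_mul hq hq0 hx hg N).tsum_eq)
  rw [jtheta, hlim, tsum_mul_left, mul_inv_cancel_left₀ (qPochhammer_self_ne_zero hq)]

lemma jacobiTheta₂_term_shift_succ (z τ : ℂ) (n : ℤ) :
    jacobiTheta₂_term (n + 1) (z + 1 / 2 - τ / 2) τ =
      -(cexp (2 * π * I * z) * cexp (2 * π * I * τ) ^ n *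
        jacobiTheta₂_term n (z + 1 / 2 - τ / 2) τ) := by
  rw [← neg_one_mul, ← exp_pi_mul_I]
  simp only [jacobiTheta₂_term, ← exp_int_mul, ← exp_add]
  congr 1
  push_cast
  ring

theorem qPochhammer_mul_jtheta_eq_jacobiTheta₂ {τ : ℂ} (hτ : 0 < τ.im) (z : ℂ) :
    qPochhammer (cexp (2 * π * I * τ)) (cexp (2 * π * I * τ)) *
      jtheta (cexp (2 * π * I * z)) (cexp (2 * π * I * τ)) =
        jacobiTheta₂ (z + 1 / 2 - τ / 2) τ := by
  have hsum := hasSum_jacobiTheta₂_term (z + 1 / 2 - τ / 2) hτ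
  have hprod := qPochhammer_mul_jtheta_eq_tsum (UpperHalfPlane.norm_exp_two_pi_I_lt_one ⟨τ, hτ⟩)
    (exp_ne_zero _) (exp_ne_zero _) (jacobiTheta₂_term_shift_succ z τ) hsum.summable
  rwa [hsum.tsum_eq, show jacobiTheta₂_term 0 (z + 1 / 2 - τ / 2) τ = 1 by simp [jacobiTheta₂_term],
    one_mul] at hprod

end TripleProduct

section ThreeTermRelation

lemma hasSum_jacobiTheta₂_term_mul_jacobiTheta₂_term {τ : ℂ} (hτ : 0 < τ.im) (a b : ℂ) :
    HasSum (fun n : ℤ × ℤ => jacobiTheta₂_term n.1 a τ * jacobiTheta₂_term n.2 b τ)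
      (jacobiTheta₂ a τ * jacobiTheta₂ b τ) := by
  have ha := hasSum_jacobiTheta₂_term a hτ
  have hb := hasSum_jacobiTheta₂_term b hτ
  exact HasSum.mul (f := (jacobiTheta₂_term · a τ)) (g := (jacobiTheta₂_term · b τ)) ha hb
    (summable_mul_of_summable_norm (f := (jacobiTheta₂_term · a τ))
      (g := (jacobiTheta₂_term · b τ)) ha.summable.norm hb.summable.norm)

/-- The lattice points of even coordinate sum for `c = 0`, of odd coordinate sum for `c = 1`,
parametrized by half-sums and half-differences. -/
def sumDiff (c : ℤ) (n : ℤ × ℤ) : ℤ × ℤ := (n.1 + n.2 + c, n.1 - n.2)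

lemma sumDiff_injective (c : ℤ) : Function.Injective (sumDiff c) := by
  rintro ⟨k, l⟩ ⟨k', l'⟩ h
  simp only [sumDiff, Prod.mk.injEq] at h ⊢
  lia

lemma isCompl_range_sumDiff : IsCompl (Set.range (sumDiff 0)) (Set.range (sumDiff 1)) := by
  constructor
  · rw [Set.disjoint_left]
    rintro _ ⟨⟨k, l⟩, rfl⟩ ⟨⟨k', l'⟩, h⟩
    simp only [sumDiff, Prod.mk.injEq] at h
    lia
  · rw [codisjoint_iff]
    refine Set.eq_univ_of_forall ?_
    rintro ⟨m, n⟩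
    rcases Int.even_or_odd (m + n) with ⟨c, h⟩ | ⟨c, h⟩
    · exact .inl ⟨(c, m - c), by simp only [sumDiff, Prod.mk.injEq]; lia⟩
    · exact .inr ⟨(c, m - 1 - c), by simp only [sumDiff, Prod.mk.injEq]; lia⟩

lemma hasSum_of_hasSum_comp_sumDiff {f : ℤ × ℤ → ℂ} {s t : ℂ} (hs : HasSum (f ∘ sumDiff 0) s)
    (ht : HasSum (f ∘ sumDiff 1) t) : HasSum f (s + t) :=
  HasSum.add_isCompl isCompl_range_sumDiff ((sumDiff_injective 0).hasSum_range_iff.mpr hs)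
    ((sumDiff_injective 1).hasSum_range_iff.mpr ht)

theorem jacobiTheta₂_add_mul_jacobiTheta₂_sub {τ : ℂ} (hτ : 0 < τ.im) (a b : ℂ) :
    jacobiTheta₂ (a + b) τ * jacobiTheta₂ (a - b) τ =
      jacobiTheta₂ (2 * a) (2 * τ) * jacobiTheta₂ (2 * b) (2 * τ) +
      cexp (2 * π * I * (a + b) + π * I * τ) *
        (jacobiTheta₂ (2 * a + τ) (2 * τ) * jacobiTheta₂ (2 * b + τ) (2 * τ)) := by
  have hτ2 : 0 < (2 * τ).im := by simpa using hτ
  have hprod := hasSum_jacobiTheta₂_term_mul_jacobiTheta₂_term hτ (a + b) (a - b)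
  have heven := hasSum_jacobiTheta₂_term_mul_jacobiTheta₂_term hτ2 (2 * a) (2 * b)
  have hodd := (hasSum_jacobiTheta₂_term_mul_jacobiTheta₂_term hτ2 (2 * a + τ) (2 * b + τ)).mul_left
    (cexp (2 * π * I * (a + b) + π * I * τ))
  refine hprod.unique (hasSum_of_hasSum_comp_sumDiff ?_ ?_)
  · refine HasSum.congr_fun heven fun n => ?_
    simp only [sumDiff, Function.comp_apply, jacobiTheta₂_term, ← exp_add]
    congr 1
    push_cast
    ring
  · refine HasSum.congr_fun hodd fun n => ?_
    simp only [sumDiff, Function.comp_apply, jacobiTheta₂_term, ← exp_add]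
    congr 1
    push_cast
    ring

/-- The kernel `x⁻¹ θ(xy) θ(x/y)`, antisymmetric in `x` and `y`. -/
noncomputable def jthetaKernel (q x y : ℂ) : ℂ := x⁻¹ * (jtheta (x * y) q * jtheta (x / y) q)

lemma jacobiTheta₂_sub_half_right (z τ : ℂ) :
    jacobiTheta₂ (z - τ / 2) τ = cexp (2 * π * I * z) * jacobiTheta₂ (z + τ / 2) τ := by
  have hexp : cexp (-π * I * (τ + 2 * (z - τ / 2))) = (cexp (2 * π * I * z))⁻¹ := by
    rw [← exp_neg]
    ring_nf
  rw [show z + τ / 2 = z - τ / 2 + τ by ring, jacobiTheta₂_add_left', hexp,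
    mul_inv_cancel_left₀ (exp_ne_zero _)]

lemma qPochhammer_sq_mul_jthetaKernel {τ : ℂ} (hτ : 0 < τ.im) (z w : ℂ) :
    qPochhammer (cexp (2 * π * I * τ)) (cexp (2 * π * I * τ)) ^ 2 *
      jthetaKernel (cexp (2 * π * I * τ)) (cexp (2 * π * I * z)) (cexp (2 * π * I * w)) =
      cexp (2 * π * I * z) * jacobiTheta₂ (2 * z + τ) (2 * τ) * jacobiTheta₂ (2 * w) (2 * τ) -
        jacobiTheta₂ (2 * z) (2 * τ) *
          (cexp (2 * π * I * w) * jacobiTheta₂ (2 * w + τ) (2 * τ)) := by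
  have hsum := qPochhammer_mul_jtheta_eq_jacobiTheta₂ hτ (z + w)
  have hdiff := qPochhammer_mul_jtheta_eq_jacobiTheta₂ hτ (z - w)
  rw [mul_add, exp_add] at hsum
  rw [mul_sub, exp_sub] at hdiff
  have hsplit := jacobiTheta₂_add_mul_jacobiTheta₂_sub hτ (z + 1 / 2 - τ / 2) w
  have hcoeff : cexp (2 * π * I * (z + 1 / 2 - τ / 2 + w) + π * I * τ) =
      -(cexp (2 * π * I * z) * cexp (2 * π * I * w)) := by
    rw [← neg_one_mul, ← exp_pi_mul_I, ← exp_add, ← exp_add]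
    ring_nf
  have hreflect : jacobiTheta₂ (2 * (z + 1 / 2 - τ / 2)) (2 * τ) =
      cexp (2 * π * I * z) ^ 2 * jacobiTheta₂ (2 * z + τ) (2 * τ) := by
    rw [show 2 * (z + 1 / 2 - τ / 2) = 2 * z - 2 * τ / 2 + 1 by ring, jacobiTheta₂_add_left,
      jacobiTheta₂_sub_half_right, ← exp_nat_mul]
    ring_nf
  have hperiod : jacobiTheta₂ (2 * (z + 1 / 2 - τ / 2) + τ) (2 * τ) =
      jacobiTheta₂ (2 * z) (2 * τ) := by
    rw [show 2 * (z + 1 / 2 - τ / 2) + τ = 2 * z + 1 by ring, jacobiTheta₂_add_left]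
  rw [hcoeff, hreflect, hperiod, show z + 1 / 2 - τ / 2 + w = z + w + 1 / 2 - τ / 2 by ring,
    show z + 1 / 2 - τ / 2 - w = z - w + 1 / 2 - τ / 2 by ring, ← hsum, ← hdiff] at hsplit
  have hx := mul_inv_cancel₀ (exp_ne_zero (2 * π * I * z))
  rw [jthetaKernel]
  linear_combination (cexp (2 * π * I * z))⁻¹ * hsplit +
    (cexp (2 * π * I * z) * jacobiTheta₂ (2 * z + τ) (2 * τ) * jacobiTheta₂ (2 * w) (2 * τ) -
        jacobiTheta₂ (2 * z) (2 * τ) *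
          (cexp (2 * π * I * w) * jacobiTheta₂ (2 * w + τ) (2 * τ))) * hx

lemma exists_exp_two_pi_I_mul_eq {x : ℂ} (hx : x ≠ 0) : ∃ z, cexp (2 * π * I * z) = x :=
  ⟨log x / (2 * π * I), by rw [mul_div_cancel₀ _ two_pi_I_ne_zero, exp_log hx]⟩

theorem jthetaKernel_three_term {q x y u v : ℂ} (hq : ‖q‖ < 1) (hq0 : q ≠ 0) (hx : x ≠ 0)
    (hy : y ≠ 0) (hu : u ≠ 0) (hv : v ≠ 0) :
    jthetaKernel q x y * jthetaKernel q u v + jthetaKernel q x u * jthetaKernel q v y +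
      jthetaKernel q x v * jthetaKernel q y u = 0 := by
  obtain ⟨τ, rfl⟩ := exists_exp_two_pi_I_mul_eq hq0
  have hτ : 0 < τ.im := by simpa [norm_exp, Real.pi_pos] using hq
  obtain ⟨a, rfl⟩ := exists_exp_two_pi_I_mul_eq hx
  obtain ⟨b, rfl⟩ := exists_exp_two_pi_I_mul_eq hy
  obtain ⟨c, rfl⟩ := exists_exp_two_pi_I_mul_eq hu
  obtain ⟨d, rfl⟩ := exists_exp_two_pi_I_mul_eq hv
  have hpair (c X Y : ℂ) : c ^ 4 * (X * Y) = c ^ 2 * X * (c ^ 2 * Y) := by ring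
  refine mul_left_cancel₀ (pow_ne_zero 4 (qPochhammer_self_ne_zero hq)) ?_
  simp only [mul_add, hpair, qPochhammer_sq_mul_jthetaKernel hτ]
  -- The Plücker relation for `2 × 2` minors.
  ring

end ThreeTermRelation

section Duplication

variable {q x h k : ℂ}

-- The three-term relation at `(x, 1, hx, k)`.
lemma jtheta_sq_mul_jtheta_mul_sub (hq : ‖q‖ < 1) (hq0 : q ≠ 0) (hx : x ≠ 0) (hh : h ≠ 0)
    (hk : k ≠ 0) :
    jtheta x q ^ 2 * (jtheta (k * (h * x)) q * jtheta (h * x / k) q) -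
      jtheta (h * x) q ^ 2 * (jtheta (k * x) q * jtheta (x / k) q) =
        x / k * (jtheta (h * x ^ 2) q * jtheta h q * jtheta k q ^ 2) := by
  have hthree := jthetaKernel_three_term hq hq0 hx one_ne_zero (mul_ne_zero hh hx) hk
  have hinv : jtheta (x / (h * x)) q = -(h⁻¹ * jtheta h q) := by
    rw [← jtheta_inv hq hh, div_mul_cancel_right₀ hx]
  have hinv' : jtheta (1 / (h * x)) q = -((h * x)⁻¹ * jtheta (h * x) q) := by
    rw [one_div, jtheta_inv hq (mul_ne_zero hh hx)]
  simp only [jthetaKernel, hinv, hinv', mul_one, one_mul, div_one, mul_comm _ k,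
    show x * (h * x) = h * x ^ 2 by ring] at hthree
  field_simp at hthree ⊢
  linear_combination hthree

lemma jtheta_neg_sq_mul_sub (hq : ‖q‖ < 1) (hq0 : q ≠ 0) (hx : x ≠ 0) (hh : h ≠ 0) :
    jtheta (-x) q ^ 2 * jtheta (h * x) q ^ 2 - jtheta x q ^ 2 * jtheta (-(h * x)) q ^ 2 =
      x * (jtheta (h * x ^ 2) q * jtheta h q * jtheta (-1) q ^ 2) := by
  have hdup := jtheta_sq_mul_jtheta_mul_sub hq hq0 hx hh (neg_ne_zero.mpr one_ne_zero)
  simp only [neg_one_mul, div_neg, div_one] at hdup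
  linear_combination -hdup

lemma jtheta_sqrt_mul_sq_mul_sub (hk1 : ‖k ^ 2‖ < 1) (hk : k ≠ 0) (hx : x ≠ 0) (hh : h ≠ 0) :
    jtheta (k * x) (k ^ 2) ^ 2 * jtheta (h * x) (k ^ 2) ^ 2 -
      h * (jtheta x (k ^ 2) ^ 2 * jtheta (k * (h * x)) (k ^ 2) ^ 2) =
        jtheta (h * x ^ 2) (k ^ 2) * jtheta h (k ^ 2) * jtheta k (k ^ 2) ^ 2 := by
  have hshift {y : ℂ} (hy : y ≠ 0) :
      jtheta (y / k) (k ^ 2) = -(y / k * jtheta (k * y) (k ^ 2)) := by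
    have hquasi := jtheta_mul_left hk1 (pow_ne_zero 2 hk) (div_ne_zero hy hk)
    rw [show k ^ 2 * (y / k) = k * y by field_simp] at hquasi
    rw [hquasi]
    field_simp
  have hdup := jtheta_sq_mul_jtheta_mul_sub hk1 (pow_ne_zero 2 hk) hx hh hk
  rw [hshift hx, hshift (mul_ne_zero hh hx)] at hdup
  refine mul_left_cancel₀ (div_ne_zero hx hk) ?_
  linear_combination hdup

end Duplication

section ThetaFunctions

/-- Jacobi's `ϑ₁` of nome `p` in the multiplicative variable `x = e^{2iz}`, without its prefactor
`i e^{-iz} p^{1/4} (p²; p²)_∞`. -/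
noncomputable def theta₁ (p x : ℂ) : ℂ := jtheta x (p ^ 2)

/-- Jacobi's `ϑ₂` of nome `p` in the multiplicative variable `x = e^{2iz}`, without its prefactor
`e^{-iz} p^{1/4} (p²; p²)_∞`. -/
noncomputable def theta₂ (p x : ℂ) : ℂ := jtheta (-x) (p ^ 2)

/-- Jacobi's `ϑ₃` of nome `p` in the multiplicative variable `x = e^{2iz}`, without its prefactor
`(p²; p²)_∞`. -/
noncomputable def theta₃ (p x : ℂ) : ℂ := jtheta (-(p * x)) (p ^ 2)

/-- Jacobi's `ϑ₄` of nome `p` in the multiplicative variable `x = e^{2iz}`, without its prefactor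
`(p²; p²)_∞`. -/
noncomputable def theta₄ (p x : ℂ) : ℂ := jtheta (p * x) (p ^ 2)

lemma theta₁_neg_left (p x : ℂ) : theta₁ (-p) x = theta₁ p x := by simp only [theta₁, neg_sq]

lemma theta₂_neg_left (p x : ℂ) : theta₂ (-p) x = theta₂ p x := by simp only [theta₂, neg_sq]

lemma theta₃_neg_left (p x : ℂ) : theta₃ (-p) x = theta₄ p x := by
  simp only [theta₃, theta₄, neg_mul, neg_neg, neg_sq]

lemma theta₄_neg_left (p x : ℂ) : theta₄ (-p) x = theta₃ p x := by
  simp only [theta₃, theta₄, neg_mul, neg_sq]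

variable {p x : ℂ}

lemma theta₁_inv (hp : ‖p‖ < 1) (hx : x ≠ 0) : theta₁ p x⁻¹ = -(x⁻¹ * theta₁ p x) :=
  jtheta_inv (norm_pow_lt_one_of_norm_lt_one hp two_ne_zero) hx

lemma theta₂_inv (hp : ‖p‖ < 1) (hx : x ≠ 0) : theta₂ p x⁻¹ = x⁻¹ * theta₂ p x := by
  rw [theta₂, theta₂, ← inv_neg, jtheta_inv (norm_pow_lt_one_of_norm_lt_one hp two_ne_zero)
    (neg_ne_zero.mpr hx), inv_neg, neg_mul, neg_neg]

lemma theta₄_inv (hp : ‖p‖ < 1) (hp0 : p ≠ 0) (x : ℂ) : theta₄ p x⁻¹ = theta₄ p x := by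
  rw [theta₄, theta₄, ← jtheta_div (norm_pow_lt_one_of_norm_lt_one hp two_ne_zero)
    (pow_ne_zero 2 hp0) (p * x)]
  congr 1
  field_simp

lemma theta₃_inv (hp : ‖p‖ < 1) (hp0 : p ≠ 0) (x : ℂ) : theta₃ p x⁻¹ = theta₃ p x := by
  rw [← theta₄_neg_left, ← theta₄_neg_left,
    theta₄_inv (by rwa [norm_neg]) (neg_ne_zero.mpr hp0)]

lemma theta₁_mul_theta₂_mul_theta₃_mul_theta₄ (hp : ‖p‖ < 1) (hp0 : p ≠ 0) (x : ℂ) :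
    theta₁ p x * theta₂ p x * theta₃ p x * theta₄ p x = theta₁ p (x ^ 2) := by
  have h14 := jtheta_sq_mul_jtheta_sq hp hp0 x
  have h23 := jtheta_sq_mul_jtheta_sq hp hp0 (-x)
  rw [mul_neg] at h23
  rw [theta₁, theta₁, theta₂, theta₃, theta₄, ← jtheta_mul_jtheta_neg hp, ← h14, ← h23]
  ring

lemma theta₂_one_mul_theta₃_one_mul_theta₄_one (hp : ‖p‖ < 1) (hp0 : p ≠ 0) :
    theta₂ p 1 * theta₃ p 1 * theta₄ p 1 = 2 := by
  have hq := norm_pow_lt_one_of_norm_lt_one hp two_ne_zero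
  have hprod := qPochhammer_mul_qPochhammer_neg_mul_qPochhammer_neg_sq hp
  have hsqrt : p ^ 2 * p⁻¹ = p := by field_simp
  simp only [theta₂, theta₃, theta₄, jtheta_eq_qPochhammer_mul hq, mul_one, inv_neg, inv_one,
    mul_neg, hsqrt, qPochhammer_eq_one_sub_mul hq (-1)]
  linear_combination 2 * (qPochhammer (p ^ 2) p * qPochhammer (p ^ 2) (-p) *
    qPochhammer (p ^ 2) (-p ^ 2) + 1) * hprod

lemma theta₂_sq_mul_theta₄_sq_sub (hp : ‖p‖ < 1) (hp0 : p ≠ 0) (hx : x ≠ 0) :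
    theta₂ p x ^ 2 * theta₄ p x ^ 2 - theta₁ p x ^ 2 * theta₃ p x ^ 2 =
      x * (theta₄ p (x ^ 2) * theta₄ p 1 * theta₂ p 1 ^ 2) := by
  simpa only [theta₁, theta₂, theta₃, theta₄, mul_one] using
    jtheta_neg_sq_mul_sub (norm_pow_lt_one_of_norm_lt_one hp two_ne_zero) (pow_ne_zero 2 hp0) hx hp0

lemma theta₂_sq_mul_theta₄_sq_add (hp : ‖p‖ < 1) (hp0 : p ≠ 0) (hx : x ≠ 0) :
    theta₂ p x ^ 2 * theta₄ p x ^ 2 + theta₁ p x ^ 2 * theta₃ p x ^ 2 =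
      theta₂ p (x ^ 2) * theta₂ p 1 * theta₄ p 1 ^ 2 := by
  have hdup := jtheta_sqrt_mul_sq_mul_sub (norm_pow_lt_one_of_norm_lt_one hp two_ne_zero) hp0 hx
    (neg_ne_zero.mpr one_ne_zero)
  simp only [neg_one_mul, mul_neg] at hdup
  simp only [theta₁, theta₂, theta₃, theta₄, mul_one]
  linear_combination hdup

lemma theta₃_sq_mul_theta₄_sq_sub (hp : ‖p‖ < 1) (hp0 : p ≠ 0) (hx : x ≠ 0) :
    x ^ 2 * (theta₃ p x ^ 2 * theta₄ p x ^ 2) - p * (theta₁ p x ^ 2 * theta₂ p x ^ 2) =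
      x ^ 2 * (theta₄ p (x ^ 2) * theta₄ p 1 * theta₃ p 1 ^ 2) := by
  have hq := norm_pow_lt_one_of_norm_lt_one hp two_ne_zero
  have hdup := jtheta_sqrt_mul_sq_mul_sub (k := -p) (by rwa [neg_sq]) (neg_ne_zero.mpr hp0) hx hp0
  have hquasi := jtheta_mul_left hq (pow_ne_zero 2 hp0) (neg_ne_zero.mpr hx)
  rw [show -p * (p * x) = p ^ 2 * -x by ring, neg_sq, hquasi] at hdup
  simp only [theta₁, theta₂, theta₃, theta₄, mul_one]
  field_simp at hdup
  linear_combination hdup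

lemma theta₁_sq_mul_theta₃_sq (hp : ‖p‖ < 1) (hp0 : p ≠ 0) (hx : x ≠ 0) :
    theta₁ p x ^ 2 * theta₃ p x ^ 2 * theta₃ p 1 =
      theta₂ p (x ^ 2) * theta₄ p 1 - x * theta₄ p (x ^ 2) * theta₂ p 1 := by
  linear_combination theta₃ p 1 / 2 *
      (theta₂_sq_mul_theta₄_sq_add hp hp0 hx - theta₂_sq_mul_theta₄_sq_sub hp hp0 hx) +
    (theta₂ p (x ^ 2) * theta₄ p 1 - x * theta₄ p (x ^ 2) * theta₂ p 1) / 2 *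
      theta₂_one_mul_theta₃_one_mul_theta₄_one hp hp0

lemma theta₂_sq_mul_theta₄_sq (hp : ‖p‖ < 1) (hp0 : p ≠ 0) (hx : x ≠ 0) :
    theta₂ p x ^ 2 * theta₄ p x ^ 2 * theta₃ p 1 =
      theta₂ p (x ^ 2) * theta₄ p 1 + x * theta₄ p (x ^ 2) * theta₂ p 1 := by
  linear_combination theta₃ p 1 / 2 *
      (theta₂_sq_mul_theta₄_sq_add hp hp0 hx + theta₂_sq_mul_theta₄_sq_sub hp hp0 hx) +
    (theta₂ p (x ^ 2) * theta₄ p 1 + x * theta₄ p (x ^ 2) * theta₂ p 1) / 2 *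
      theta₂_one_mul_theta₃_one_mul_theta₄_one hp hp0

lemma theta₁_sq_mul_theta₄_sq (hp : ‖p‖ < 1) (hp0 : p ≠ 0) (hx : x ≠ 0) :
    theta₁ p x ^ 2 * theta₄ p x ^ 2 * theta₄ p 1 =
      theta₂ p (x ^ 2) * theta₃ p 1 - x * theta₃ p (x ^ 2) * theta₂ p 1 := by
  simpa only [theta₁_neg_left, theta₂_neg_left, theta₃_neg_left, theta₄_neg_left] using
    theta₁_sq_mul_theta₃_sq (p := -p) (by rwa [norm_neg]) (neg_ne_zero.mpr hp0) hx

lemma theta₁_sq_mul_theta₂_sq (hp : ‖p‖ < 1) (hp0 : p ≠ 0) (hx : x ≠ 0) :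
    p * (theta₁ p x ^ 2 * theta₂ p x ^ 2 * theta₂ p 1) =
      x ^ 2 * (theta₃ p (x ^ 2) * theta₄ p 1 - theta₄ p (x ^ 2) * theta₃ p 1) := by
  have hneg := theta₃_sq_mul_theta₄_sq_sub (p := -p) (by rwa [norm_neg]) (neg_ne_zero.mpr hp0) hx
  simp only [theta₁_neg_left, theta₂_neg_left, theta₃_neg_left, theta₄_neg_left] at hneg
  linear_combination theta₂ p 1 / 2 * (hneg - theta₃_sq_mul_theta₄_sq_sub hp hp0 hx) +
    x ^ 2 * (theta₃ p (x ^ 2) * theta₄ p 1 - theta₄ p (x ^ 2) * theta₃ p 1) / 2 *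
      theta₂_one_mul_theta₃_one_mul_theta₄_one hp hp0

end ThetaFunctions

section ThetaRatio

/-- The Hauptmodul as a function of the nome `p` and a primitive cube root of unity `w`. -/
noncomputable def thetaRatio (p w : ℂ) : ℂ :=
  w ^ 2 * theta₂ p 1 * theta₃ p w / (theta₃ p 1 * theta₂ p w)

variable {p w : ℂ}

lemma theta₁_cubeRoot_ne_zero (hp : ‖p‖ < 1) (hw : w ^ 2 + w + 1 = 0) : theta₁ p w ≠ 0 := by
  have hq := norm_pow_lt_one_of_norm_lt_one hp two_ne_zero
  have hw1 : 1 - w ≠ 0 := by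
    intro h
    obtain rfl : 1 = w := sub_eq_zero.mp h
    norm_num at hw
  refine left_ne_zero_of_mul (b := qPochhammer (p ^ 2) (p ^ 2)) ?_
  rw [theta₁, jtheta_cubeRoot_mul_qPochhammer hq hw]
  exact mul_ne_zero hw1
    (qPochhammer_self_ne_zero (norm_pow_lt_one_of_norm_lt_one hq three_ne_zero))

lemma theta₂_mul_theta₃_mul_theta₄_cubeRoot (hp : ‖p‖ < 1) (hp0 : p ≠ 0)
    (hw : w ^ 2 + w + 1 = 0) : theta₂ p w * theta₃ p w * theta₄ p w = -w ^ 2 := by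
  refine mul_left_cancel₀ (theta₁_cubeRoot_ne_zero hp hw) ?_
  have hdup := theta₁_mul_theta₂_mul_theta₃_mul_theta₄ hp hp0 w
  rw [← inv_eq_sq_of_sq_add_self_add_one hw,
    theta₁_inv hp (ne_zero_of_sq_add_self_add_one hw)] at hdup
  rw [← inv_eq_sq_of_sq_add_self_add_one hw]
  linear_combination hdup

lemma theta₃_one_ne_zero (hp : ‖p‖ < 1) (hp0 : p ≠ 0) : theta₃ p 1 ≠ 0 := by
  intro h
  simpa [h] using theta₂_one_mul_theta₃_one_mul_theta₄_one hp hp0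

lemma theta₂_cubeRoot_ne_zero (hp : ‖p‖ < 1) (hp0 : p ≠ 0) (hw : w ^ 2 + w + 1 = 0) :
    theta₂ p w ≠ 0 := by
  intro h
  simpa [h, ne_zero_of_sq_add_self_add_one hw] using
    theta₂_mul_theta₃_mul_theta₄_cubeRoot hp hp0 hw

lemma theta₄_cubeRoot_ne_zero (hp : ‖p‖ < 1) (hp0 : p ≠ 0) (hw : w ^ 2 + w + 1 = 0) :
    theta₄ p w ≠ 0 := by
  intro h
  simpa [h, ne_zero_of_sq_add_self_add_one hw] using
    theta₂_mul_theta₃_mul_theta₄_cubeRoot hp hp0 hw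

lemma thetaRatio_sub_one (hp : ‖p‖ < 1) (hp0 : p ≠ 0) (hw : w ^ 2 + w + 1 = 0) :
    thetaRatio p w - 1 =
      -(w * theta₁ p w ^ 2 * theta₄ p w ^ 2 * theta₄ p 1) / (theta₃ p 1 * theta₂ p w) := by
  have hT₃ := theta₃_one_ne_zero hp hp0
  have ht₂ := theta₂_cubeRoot_ne_zero hp hp0 hw
  have hw0 := ne_zero_of_sq_add_self_add_one hw
  have hdup := theta₁_sq_mul_theta₄_sq hp hp0 hw0
  rw [← inv_eq_sq_of_sq_add_self_add_one hw, theta₂_inv hp hw0, theta₃_inv hp hp0] at hdup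
  rw [thetaRatio, eq_div_iff (mul_ne_zero hT₃ ht₂), sub_mul,
    div_mul_cancel₀ _ (mul_ne_zero hT₃ ht₂)]
  linear_combination w * hdup + theta₂ p w * theta₃ p 1 * mul_inv_cancel₀ hw0

lemma thetaRatio_add_one (hp : ‖p‖ < 1) (hp0 : p ≠ 0) (hw : w ^ 2 + w + 1 = 0) :
    thetaRatio p w + 1 = -(theta₄ p 1 * theta₃ p w) / (theta₃ p 1 * theta₄ p w) := by
  have hT₃ := theta₃_one_ne_zero hp hp0
  have ht₂ := theta₂_cubeRoot_ne_zero hp hp0 hw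
  have ht₄ := theta₄_cubeRoot_ne_zero hp hp0 hw
  have hw0 := ne_zero_of_sq_add_self_add_one hw
  have hdup := theta₂_sq_mul_theta₄_sq hp hp0 hw0
  have hprod := theta₂_mul_theta₃_mul_theta₄_cubeRoot hp hp0 hw
  rw [← inv_eq_sq_of_sq_add_self_add_one hw, theta₂_inv hp hw0, theta₄_inv hp hp0,
    inv_eq_sq_of_sq_add_self_add_one hw] at hdup
  have hlinear : theta₃ p 1 * theta₂ p w * theta₄ p w + theta₄ p 1 * theta₂ p w * theta₃ p w +
      w ^ 2 * theta₂ p 1 * theta₃ p w * theta₄ p w = 0 := by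
    linear_combination (-w * theta₃ p w) * hdup + w * theta₃ p 1 * theta₂ p w * theta₄ p w * hprod -
      (theta₃ p 1 * theta₂ p w * theta₄ p w + theta₄ p 1 * theta₂ p w * theta₃ p w) * (w - 1) * hw
  rw [thetaRatio]
  field_simp
  linear_combination hlinear

lemma thetaRatio_add_two (hp : ‖p‖ < 1) (hp0 : p ≠ 0) (hw : w ^ 2 + w + 1 = 0) :
    thetaRatio p w + 2 =
      -(p * w * theta₁ p w ^ 2 * theta₂ p w ^ 2 * theta₂ p 1) / (theta₃ p 1 * theta₄ p w) := by
  have hT₃ := theta₃_one_ne_zero hp hp0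
  have ht₄ := theta₄_cubeRoot_ne_zero hp hp0 hw
  have hw0 := ne_zero_of_sq_add_self_add_one hw
  have hdup := theta₁_sq_mul_theta₂_sq hp hp0 hw0
  rw [← inv_eq_sq_of_sq_add_self_add_one hw, theta₃_inv hp hp0, theta₄_inv hp hp0] at hdup
  rw [show thetaRatio p w + 2 = thetaRatio p w + 1 + 1 by ring, thetaRatio_add_one hp hp0 hw,
    div_add_one (mul_ne_zero hT₃ ht₄)]
  congr 1
  linear_combination w * hdup +
    (theta₃ p w * theta₄ p 1 - theta₄ p w * theta₃ p 1) * mul_inv_cancel₀ hw0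

lemma two_mul_thetaRatio_add_one (hp : ‖p‖ < 1) (hp0 : p ≠ 0) (hw : w ^ 2 + w + 1 = 0) :
    2 * thetaRatio p w + 1 =
      -(w * theta₁ p w ^ 2 * theta₃ p w ^ 3) / (theta₂ p w * theta₄ p w) := by
  have hT₃ := theta₃_one_ne_zero hp hp0
  have ht₂ := theta₂_cubeRoot_ne_zero hp hp0 hw
  have ht₄ := theta₄_cubeRoot_ne_zero hp hp0 hw
  have hw0 := ne_zero_of_sq_add_self_add_one hw
  have hdup := theta₁_sq_mul_theta₃_sq hp hp0 hw0
  rw [← inv_eq_sq_of_sq_add_self_add_one hw, theta₂_inv hp hw0, theta₄_inv hp hp0,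
    inv_eq_sq_of_sq_add_self_add_one hw] at hdup
  rw [show 2 * thetaRatio p w + 1 = thetaRatio p w + (thetaRatio p w + 1) by ring,
    thetaRatio_add_one hp hp0 hw, thetaRatio]
  field_simp
  linear_combination (w * theta₃ p w) * hdup + (w - 1) * theta₃ p w * theta₂ p w * theta₄ p 1 * hw

theorem thetaRatio_cubic_relation (hp : ‖p‖ < 1) (hp0 : p ≠ 0) (hw : w ^ 2 + w + 1 = 0) :
    (thetaRatio p w - 1) * (thetaRatio p w + 2) * (2 * thetaRatio p w + 1) =
      -(p * theta₁ p w ^ 6) * (thetaRatio p w * (thetaRatio p w + 1)) := by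
  have hT₃ := theta₃_one_ne_zero hp hp0
  have ht₂ := theta₂_cubeRoot_ne_zero hp hp0 hw
  have ht₄ := theta₄_cubeRoot_ne_zero hp hp0 hw
  have hprod := theta₂_mul_theta₃_mul_theta₄_cubeRoot hp hp0 hw
  rw [thetaRatio_sub_one hp hp0 hw, thetaRatio_add_two hp hp0 hw,
    two_mul_thetaRatio_add_one hp hp0 hw, thetaRatio_add_one hp hp0 hw, thetaRatio]
  field_simp
  linear_combination theta₁ p w ^ 6 * theta₂ p 1 * theta₄ p 1 * theta₃ p w ^ 2 *
    (w ^ 2 * (w - 1) * hw - w ^ 3 * hprod)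

end ThetaRatio

section EtaQuotient

variable {τ : ℂ}

lemma dedekindEta_eq_exp_mul_qPochhammer (τ : ℂ) :
    dedekindEta τ =
      cexp (π * I * τ / 12) * qPochhammer (cexp (2 * π * I * τ)) (cexp (2 * π * I * τ)) := by
  simp only [dedekindEta, qPochhammer_self, ← ModularForm.eta_q_eq_cexp, ModularForm.eta_q_eq_pow]

lemma dedekindEta_eq_modularForm_eta : dedekindEta = ModularForm.eta := by
  ext τ
  simp only [dedekindEta, ModularForm.eta, ModularForm.eta_q_eq_cexp, Function.Periodic.qParam]
  congr 2
  push_cast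
  ring

lemma dedekindEta_ne_zero (hτ : 0 < τ.im) : dedekindEta τ ≠ 0 := by
  rw [dedekindEta_eq_modularForm_eta]
  exact ModularForm.eta_ne_zero hτ

lemma differentiableAt_dedekindEta (hτ : 0 < τ.im) : DifferentiableAt ℂ dedekindEta τ := by
  rw [dedekindEta_eq_modularForm_eta]
  exact ModularForm.differentiableAt_eta_of_mem_upperHalfPlaneSet hτ

lemma phi5_ne_zero (hτ : 0 < τ.im) : phi5 τ ≠ 0 :=
  div_ne_zero (dedekindEta_ne_zero (by simpa using hτ)) (dedekindEta_ne_zero hτ)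

lemma differentiableAt_phi5 (hτ : 0 < τ.im) : DifferentiableAt ℂ phi5 τ := by
  have h3τ : 0 < (3 * τ).im := by simpa using hτ
  exact ((differentiableAt_dedekindEta h3τ).comp τ (by fun_prop)).div
    (differentiableAt_dedekindEta hτ) (dedekindEta_ne_zero hτ)

lemma exp_pi_I_sq (τ : ℂ) : cexp (π * I * τ) ^ 2 = cexp (2 * π * I * τ) := by
  rw [← exp_nat_mul]
  congr 1
  push_cast
  ring

lemma norm_exp_pi_I_lt_one (hτ : 0 < τ.im) : ‖cexp (π * I * τ)‖ < 1 := by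
  have hsq := UpperHalfPlane.norm_exp_two_pi_I_lt_one ⟨τ, hτ⟩
  rw [UpperHalfPlane.coe_mk, ← exp_pi_I_sq, norm_pow] at hsq
  exact (pow_lt_one_iff_of_nonneg (norm_nonneg _) two_ne_zero).mp hsq

lemma exp_mul_theta₁_cubeRoot_pow_six {w : ℂ} (hτ : 0 < τ.im) (hw : w ^ 2 + w + 1 = 0) :
    cexp (π * I * τ) * theta₁ (cexp (π * I * τ)) w ^ 6 = -27 * phi5 τ ^ 6 := by
  have hq : ‖cexp (2 * π * I * τ)‖ < 1 := UpperHalfPlane.norm_exp_two_pi_I_lt_one ⟨τ, hτ⟩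
  have hnome : cexp (2 * π * I * (3 * τ)) = cexp (2 * π * I * τ) ^ 3 := by
    rw [← exp_nat_mul]
    congr 1
    push_cast
    ring
  have hprefactor : cexp (π * I * (3 * τ) / 12) ^ 6 =
      cexp (π * I * τ) * cexp (π * I * τ / 12) ^ 6 := by
    rw [← exp_nat_mul, ← exp_nat_mul, ← exp_add]
    congr 1
    push_cast
    ring
  have hcube := congr_arg (· ^ 6) (jtheta_cubeRoot_mul_qPochhammer hq hw)
  simp only [mul_pow, one_sub_pow_six_of_sq_add_self_add_one hw] at hcube
  rw [phi5, div_pow, ← mul_div_assoc, eq_div_iff (pow_ne_zero 6 (dedekindEta_ne_zero hτ)),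
    dedekindEta_eq_exp_mul_qPochhammer, dedekindEta_eq_exp_mul_qPochhammer, mul_pow, mul_pow,
    hprefactor, hnome, theta₁, exp_pi_I_sq]
  linear_combination cexp (π * I * τ) * cexp (π * I * τ / 12) ^ 6 * hcube

end EtaQuotient

section Hauptmodul

variable {τ : ℂ}

lemma exp_two_pi_I_div_three_sq_add_self_add_one :
    cexp (2 * π * I / 3) ^ 2 + cexp (2 * π * I / 3) + 1 = 0 := by
  have hsum := (isPrimitiveRoot_exp 3 three_ne_zero).geom_sum_eq_zero (by norm_num)
  simp only [sum_range_succ, sum_range_zero] at hsum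
  push_cast at hsum
  linear_combination hsum

lemma hauptmodul_eq_thetaRatio (τ : ℂ) :
    hauptmodul τ = thetaRatio (cexp (π * I * τ)) (cexp (2 * π * I / 3)) := by
  simp only [hauptmodul, thetaRatio, theta₂, theta₃, mul_one]

theorem hauptmodul_phi5_relation (hτ : 0 < τ.im) :
    (hauptmodul τ - 1) * (hauptmodul τ + 2) * (2 * hauptmodul τ + 1) =
      27 * phi5 τ ^ 6 * (hauptmodul τ * (hauptmodul τ + 1)) := by
  have hw := exp_two_pi_I_div_three_sq_add_self_add_one
  rw [hauptmodul_eq_thetaRatio,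
    thetaRatio_cubic_relation (norm_exp_pi_I_lt_one hτ) (exp_ne_zero _) hw,
    exp_mul_theta₁_cubeRoot_pow_six hτ hw]
  ring

lemma differentiableAt_qPochhammer_exp (hτ : 0 < τ.im) :
    DifferentiableAt ℂ (fun t => qPochhammer (cexp (2 * π * I * t)) (cexp (2 * π * I * t))) τ := by
  simpa only [dedekindEta_eq_exp_mul_qPochhammer, mul_div_cancel_left₀ _ (exp_ne_zero _)] using
    (differentiableAt_dedekindEta hτ).fun_div
      (show DifferentiableAt ℂ (fun t => cexp (π * I * t / 12)) τ by fun_prop) (exp_ne_zero _)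

lemma differentiableAt_jtheta_exp {z : ℂ → ℂ} (hτ : 0 < τ.im) (hz : DifferentiableAt ℂ z τ) :
    DifferentiableAt ℂ (fun t => jtheta (cexp (2 * π * I * z t)) (cexp (2 * π * I * t))) τ := by
  have hne {t : ℂ} (ht : 0 < t.im) :=
    qPochhammer_self_ne_zero (UpperHalfPlane.norm_exp_two_pi_I_lt_one ⟨t, ht⟩)
  have hnum : DifferentiableAt ℂ (fun t => jacobiTheta₂ (z t + 1 / 2 - t / 2) t) τ :=
    (hasFDerivAt_jacobiTheta₂ _ hτ).differentiableAt.comp (f := fun t => (z t + 1 / 2 - t / 2, t)) τ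
      (by fun_prop)
  refine (hnum.fun_div (differentiableAt_qPochhammer_exp hτ) (hne hτ)).congr_of_eventuallyEq ?_
  filter_upwards [(isOpen_lt continuous_const continuous_im).mem_nhds hτ] with t ht
  rw [← qPochhammer_mul_jtheta_eq_jacobiTheta₂ ht, mul_div_cancel_left₀ _ (hne ht)]

lemma differentiableAt_theta₂_exp {x : ℂ} (hτ : 0 < τ.im) (hx : x ≠ 0) :
    DifferentiableAt ℂ (fun t => theta₂ (cexp (π * I * t)) x) τ := by
  obtain ⟨c, hc⟩ := exists_exp_two_pi_I_mul_eq (neg_ne_zero.mpr hx)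
  simpa only [theta₂, exp_pi_I_sq, hc] using
    differentiableAt_jtheta_exp hτ (differentiableAt_const c)

lemma differentiableAt_theta₃_exp {x : ℂ} (hτ : 0 < τ.im) (hx : x ≠ 0) :
    DifferentiableAt ℂ (fun t => theta₃ (cexp (π * I * t)) x) τ := by
  obtain ⟨c, hc⟩ := exists_exp_two_pi_I_mul_eq (neg_ne_zero.mpr hx)
  have harg (t : ℂ) : cexp (2 * π * I * (t / 2 + c)) = -(cexp (π * I * t) * x) := by
    rw [mul_add, exp_add, hc, mul_neg]
    congr 3
    ring
  simpa only [theta₃, exp_pi_I_sq, harg] using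
    differentiableAt_jtheta_exp (z := fun t => t / 2 + c) hτ (by fun_prop)

lemma differentiableAt_hauptmodul (hτ : 0 < τ.im) : DifferentiableAt ℂ hauptmodul τ := by
  have hp := norm_exp_pi_I_lt_one hτ
  have hw := exp_two_pi_I_div_three_sq_add_self_add_one
  have hw0 := exp_ne_zero (2 * π * I / 3)
  simp only [funext hauptmodul_eq_thetaRatio, thetaRatio]
  exact (((differentiableAt_theta₂_exp hτ one_ne_zero).const_mul _).fun_mul
      (differentiableAt_theta₃_exp hτ hw0)).fun_div
    ((differentiableAt_theta₃_exp hτ one_ne_zero).fun_mul (differentiableAt_theta₂_exp hτ hw0))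
    (mul_ne_zero (theta₃_one_ne_zero hp (exp_ne_zero _))
      (theta₂_cubeRoot_ne_zero hp (exp_ne_zero _) hw))

end Hauptmodul

lemma deriv_div_self_eq_of_cubic_relation {F Z : ℂ → ℂ} {τ c : ℂ} (hF : DifferentiableAt ℂ F τ)
    (hZ : DifferentiableAt ℂ Z τ) (hF0 : F τ ≠ 0)
    (hZ0 : (2 * Z τ + 1) * Z τ * (Z τ + 1) * (Z τ - 1) * (Z τ + 2) ≠ 0)
    (hFZ : ∀ᶠ t in 𝓝 τ,
      (Z t - 1) * (Z t + 2) * (2 * Z t + 1) = c * F t ^ 6 * (Z t * (Z t + 1))) :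
    deriv F τ / F τ = (Z τ ^ 2 + Z τ + 1) ^ 2 /
      (3 * (2 * Z τ + 1) * Z τ * (Z τ + 1) * (Z τ - 1) * (Z τ + 2)) * deriv Z τ := by
  have hZ' := hZ.hasDerivAt
  have hlhs := ((hZ'.sub_const 1).fun_mul (hZ'.add_const 2)).fun_mul
    ((hZ'.const_mul 2).add_const 1)
  have hrhs := ((hF.hasDerivAt.fun_pow 6).const_mul c).fun_mul (hZ'.fun_mul (hZ'.add_const 1))
  have hderiv := hlhs.unique (hrhs.congr_of_eventuallyEq hFZ)
  have hkey : 3 * deriv F τ * ((2 * Z τ + 1) * Z τ * (Z τ + 1) * (Z τ - 1) * (Z τ + 2)) =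
      F τ * (Z τ ^ 2 + Z τ + 1) ^ 2 * deriv Z τ := by
    linear_combination (-(1 / 2) * (Z τ * (Z τ + 1)) * F τ) * hderiv +
      (3 * deriv F τ * (Z τ * (Z τ + 1)) + (1 / 2) * F τ * deriv Z τ * (2 * Z τ + 1)) *
        hFZ.self_of_nhds
  rw [div_mul_eq_mul_div, div_eq_div_iff hF0 (by simpa [mul_assoc] using hZ0)]
  linear_combination hkey

/-- logarithmic derivative of φ₅ in terms of the Hauptmodul ζ. -/
theorem phi5_logarithmic_derivative (τ : ℂ) (hτ : 0 < τ.im)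
    (hζ : hauptmodul τ ∉ ({0, 1, -1, -2, -(1/2)} : Set ℂ)) :
    deriv phi5 τ / phi5 τ
      = (hauptmodul τ ^ 2 + hauptmodul τ + 1) ^ 2
          / (3 * (2 * hauptmodul τ + 1) * hauptmodul τ * (hauptmodul τ + 1)
              * (hauptmodul τ - 1) * (hauptmodul τ + 2))
        * deriv hauptmodul τ := by
  have hfactors : (2 * hauptmodul τ + 1) * hauptmodul τ * (hauptmodul τ + 1) *
      (hauptmodul τ - 1) * (hauptmodul τ + 2) ≠ 0 := by
    simp only [Set.mem_insert_iff, Set.mem_singleton_iff] at hζ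
    grind
  have hrelation : ∀ᶠ t in 𝓝 τ,
      (hauptmodul t - 1) * (hauptmodul t + 2) * (2 * hauptmodul t + 1) =
        27 * phi5 t ^ 6 * (hauptmodul t * (hauptmodul t + 1)) := by
    filter_upwards [(isOpen_lt continuous_const continuous_im).mem_nhds hτ] with t ht
    exact hauptmodul_phi5_relation ht
  exact deriv_div_self_eq_of_cubic_relation (differentiableAt_phi5 hτ)
    (differentiableAt_hauptmodul hτ) (phi5_ne_zero hτ) hfactors hrelation
end

section
/- Invariance of the eta quotients under the congruence group K: let a, b, c, d be integers with ad − bc = 1, a ≡ d ≡ ±1 (mod 12), b ≡ 0 (mod 24), and c ≡ 0 (mod 72). Then for every τ in the complex upper half-plane and every j ∈ {1,2,3,4,5}, φ_j((aτ+b)/(cτ+d)) = φ_j(τ). -/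
open Complex

/-!
The multiplier of `η²` is a character `κ` of `SL(2, ℤ)`, valued in the 12th roots of unity and
given by a polynomial in the matrix entries modulo 12. For `γ ∈ Γ₀(N)` with conjugate `γ'` by
`diag(N, 1)`, the multipliers of `(η(2τ)/η(τ))²` on `Γ₀(2)` and of `η(3τ)/η(τ)` on `Γ₀(3)` are
`κ(γ') κ(γ)⁻¹` and `(d / 3) κ(γ) κ(γ')⁻⁴`. As `Γ₀(2)` and `Γ₀(3)` are generated by `-1`,
`τ ↦ τ + 1` and `τ ↦ τ / (Nτ + 1)`, both laws need only be compared on these; the last generator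
reduces to the translation through the Fricke involution `τ ↦ -1 / (Nτ)`. When `12 ∣ b` and
`12N ∣ c`, the matrices `γ` and `γ'` are diagonal modulo 12 with the same entries, so the first
multiplier is trivial; so is the second when `d ≡ ±1`, because for `d ≡ -1` its two factors are
both `-1`.
-/

section

open scoped MatrixGroups UpperHalfPlane
open ModularGroup (S T)
open CongruenceSubgroup (Gamma0 Gamma0Map)

/-! ### The abelianization of `SL(2, ℤ)` -/

/-- The exponent of the multiplier of `η²` at the matrix `(a, b; c, d)`, modulo 12. It interpolates
the classical formula `(a + d) c - b d (c² - 1) - 3 c` for odd `c` and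
`(a + d) c - b d (c² - 1) + 3 d - 3 - 3 c d` for even `c`; the Jacobi symbols in the multiplier of
`η` disappear on squaring. It is defined over any ring so that it can be reduced modulo 3 and 4. -/
def abelianizationPoly {R : Type*} [CommRing R] (a b c d : R) : R :=
  (1 - c ^ 2) * (b * d + 3 * (c - 1) * d + c + 3) + c * (a + d - 3)

lemma map_abelianizationPoly {R R' : Type*} [CommRing R] [CommRing R'] (f : R →+* R')
    (a b c d : R) :
    f (abelianizationPoly a b c d) = abelianizationPoly (f a) (f b) (f c) (f d) := by
  simp only [abelianizationPoly, map_add, map_sub, map_mul, map_pow, map_one, map_ofNat]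

lemma zmod_twelve_ext {x y : ZMod 12}
    (h3 : ZMod.castHom (show 3 ∣ 12 by decide) (ZMod 3) x = ZMod.castHom (by decide) _ y)
    (h4 : ZMod.castHom (show 4 ∣ 12 by decide) (ZMod 4) x = ZMod.castHom (by decide) _ y) :
    x = y := by
  decide +revert

lemma abelianizationPoly_T_mul {a b c d : ZMod 12} (hdet : a * d - b * c = 1) :
    abelianizationPoly (a + c) (b + d) c d = 1 + abelianizationPoly a b c d := by
  have mod_three : ∀ a b c d : ZMod 3, a * d - b * c = 1 →
      abelianizationPoly (a + c) (b + d) c d = 1 + abelianizationPoly a b c d := by decide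
  have mod_four : ∀ a b c d : ZMod 4, a * d - b * c = 1 →
      abelianizationPoly (a + c) (b + d) c d = 1 + abelianizationPoly a b c d := by decide
  apply zmod_twelve_ext <;> simp only [map_abelianizationPoly, map_add, map_one]
  · exact mod_three _ _ _ _ (by simp only [← map_mul, ← map_sub, hdet, map_one])
  · exact mod_four _ _ _ _ (by simp only [← map_mul, ← map_sub, hdet, map_one])

lemma abelianizationPoly_S_mul {a b c d : ZMod 12} (hdet : a * d - b * c = 1) :
    abelianizationPoly (-c) (-d) a b = -3 + abelianizationPoly a b c d := by
  have mod_three : ∀ a b c d : ZMod 3, a * d - b * c = 1 →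
      abelianizationPoly (-c) (-d) a b = -3 + abelianizationPoly a b c d := by decide
  have mod_four : ∀ a b c d : ZMod 4, a * d - b * c = 1 →
      abelianizationPoly (-c) (-d) a b = -3 + abelianizationPoly a b c d := by decide
  apply zmod_twelve_ext <;> simp only [map_abelianizationPoly, map_add, map_neg, map_ofNat]
  · exact mod_three _ _ _ _ (by simp only [← map_mul, ← map_sub, hdet, map_one])
  · exact mod_four _ _ _ _ (by simp only [← map_mul, ← map_sub, hdet, map_one])

/-- The class of `γ` in the abelianization `ℤ/12` of `SL(2, ℤ)`, normalized so that `T` has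
class `1`. -/
def abelianizationExponent (γ : SL(2, ℤ)) : ZMod 12 :=
  abelianizationPoly (γ 0 0 : ZMod 12) (γ 0 1) (γ 1 0) (γ 1 1)

lemma abelianizationExponent_one : abelianizationExponent 1 = 0 := by decide

lemma intCast_det_eq_one (γ : SL(2, ℤ)) (R : Type*) [CommRing R] :
    (γ 0 0 * γ 1 1 - γ 0 1 * γ 1 0 : R) = 1 := by
  have h := γ.det_coe
  rw [Matrix.det_fin_two] at h
  exact_mod_cast congrArg (Int.cast : ℤ → R) h

lemma abelianizationExponent_T_mul (γ : SL(2, ℤ)) :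
    abelianizationExponent (T * γ) = abelianizationExponent T + abelianizationExponent γ := by
  have hT : abelianizationExponent T = 1 := by decide
  rw [hT]
  simpa [abelianizationExponent, Matrix.mul_apply, Fin.sum_univ_two, ModularGroup.coe_T] using
    abelianizationPoly_T_mul (intCast_det_eq_one γ (ZMod 12))

lemma abelianizationExponent_S_mul (γ : SL(2, ℤ)) :
    abelianizationExponent (S * γ) = abelianizationExponent S + abelianizationExponent γ := by
  have hS : abelianizationExponent S = -3 := by decide
  rw [hS]
  simpa [abelianizationExponent, Matrix.mul_apply, Fin.sum_univ_two, ModularGroup.coe_S] using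
    abelianizationPoly_S_mul (intCast_det_eq_one γ (ZMod 12))

lemma abelianizationExponent_mul (γ δ : SL(2, ℤ)) :
    abelianizationExponent (γ * δ) = abelianizationExponent γ + abelianizationExponent δ := by
  have hγ : γ ∈ Subgroup.closure {S, T} := by
    simp [SpecialLinearGroup.SL2Z_generators]
  induction hγ using Subgroup.closure_induction generalizing δ with
  | mem x hx =>
    obtain rfl | rfl := hx
    · exact abelianizationExponent_S_mul δ
    · exact abelianizationExponent_T_mul δ
  | one => simp [abelianizationExponent_one]
  | mul x y _ _ hx hy => rw [mul_assoc, hx, hy, hx, add_assoc]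
  | inv x _ hx =>
    have cancel (ε : SL(2, ℤ)) :
        abelianizationExponent ε = abelianizationExponent x + abelianizationExponent (x⁻¹ * ε) := by
      rw [← hx, mul_inv_cancel_left]
    have hinv := cancel 1
    rw [abelianizationExponent_one, mul_one] at hinv
    linear_combination hinv - cancel δ

/-- The abelianization map of `SL(2, ℤ)`, with `ℤ/12` written multiplicatively. -/
def abelianizationHom : SL(2, ℤ) →* Multiplicative (ZMod 12) where
  toFun γ := .ofAdd (abelianizationExponent γ)
  map_one' := by simp [abelianizationExponent_one]
  map_mul' γ δ := by simp [abelianizationExponent_mul]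

/-! ### Generators of `Γ₀(2)` and `Γ₀(3)` -/

/-- The lower unipotent matrix `(1, 0; n, 1)`, which stabilizes the cusp `0`. -/
def lowerUnipotent (n : ℤ) : SL(2, ℤ) :=
  ⟨!![1, 0; n, 1], by simp⟩

lemma coe_lowerUnipotent (n : ℤ) : (lowerUnipotent n).1 = !![1, 0; n, 1] := rfl

lemma natCast_dvd_of_mem_Gamma0 {N : ℕ} {γ : SL(2, ℤ)} (hγ : γ ∈ Gamma0 N) : (N : ℤ) ∣ γ 1 0 :=
  (ZMod.intCast_zmod_eq_zero_iff_dvd _ N).1 hγ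

lemma upper_left_ne_zero_of_mem_Gamma0 {N : ℕ} (hN : N ≠ 1) {γ : SL(2, ℤ)} (hγ : γ ∈ Gamma0 N) :
    γ 0 0 ≠ 0 := by
  intro ha
  have hdet := intCast_det_eq_one γ ℤ
  obtain ⟨e, he⟩ := natCast_dvd_of_mem_Gamma0 hγ
  simp only [Int.cast_id, ha, he] at hdet
  have hdvd : (N : ℤ) ∣ 1 := ⟨-(γ 0 1 * e), by linarith⟩
  exact hN (Nat.dvd_one.1 (by exact_mod_cast hdvd))

lemma neg_one_mem_Gamma0 (N : ℕ) : -1 ∈ Gamma0 N := by simp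

lemma T_mem_Gamma0 (N : ℕ) : T ∈ Gamma0 N := by simp [ModularGroup.coe_T]

lemma lowerUnipotent_mem_Gamma0 (N : ℕ) : lowerUnipotent N ∈ Gamma0 N := by
  simp [coe_lowerUnipotent]

lemma mem_closure_of_lower_left_eq_zero {γ : SL(2, ℤ)} (hc : γ 1 0 = 0) :
    γ ∈ Subgroup.closure {-1, T} := by
  have hT (n : ℤ) : T ^ n ∈ Subgroup.closure {-1, T} :=
    zpow_mem (Subgroup.subset_closure (by simp)) n
  have hdet := intCast_det_eq_one γ ℤ
  simp only [Int.cast_id, hc, mul_zero, sub_zero] at hdet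
  obtain ⟨ha, hd⟩ | ⟨ha, hd⟩ := Int.mul_eq_one_iff_eq_one_or_neg_one.1 hdet
  · convert hT (γ 0 1)
    ext i j
    fin_cases i <;> fin_cases j <;> simp [ModularGroup.coe_T_zpow, ha, hc, hd]
  · have hneg : -1 ∈ Subgroup.closure {-1, T} := Subgroup.subset_closure (by simp)
    convert mul_mem hneg (hT (-γ 0 1))
    ext i j
    fin_cases i <;> fin_cases j <;> simp [ModularGroup.coe_T_zpow, ha, hc, hd]

lemma exists_abs_add_or_sub_lt {N a c : ℤ} (hN : 0 < N) (hN' : N < 4) (ha : a ≠ 0) (hc : c ≠ 0) :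
    |a + c| < |a| ∨ |a - c| < |a| ∨ |c + N * a| < |c| ∨ |c - N * a| < |c| := by
  interval_cases N <;> grind

theorem Gamma0_le_closure {N : ℕ} (hN : 1 < N) (hN' : N < 4) :
    Gamma0 N ≤ Subgroup.closure {-1, T, lowerUnipotent N} := by
  intro γ hγ
  set H := Subgroup.closure {-1, T, lowerUnipotent N}
  have hT : T ∈ H := Subgroup.subset_closure (by simp)
  have hU : lowerUnipotent N ∈ H := Subgroup.subset_closure (by simp)
  induction hn : N * (γ 0 0).natAbs + (γ 1 0).natAbs using Nat.strong_induction_on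
    generalizing γ with
  | h n ih =>
  by_cases hc : γ 1 0 = 0
  · exact Subgroup.closure_mono (by grind) (mem_closure_of_lower_left_eq_zero hc)
  have ha := upper_left_ne_zero_of_mem_Gamma0 hN.ne' hγ
  have descend {σ : SL(2, ℤ)} (hσ : σ ∈ H) (hσN : σ ∈ Gamma0 N)
      (hlt : N * |(σ * γ) 0 0| + |(σ * γ) 1 0| < N * |γ 0 0| + |γ 1 0|) : γ ∈ H := by
    refine (mul_mem_cancel_left hσ).1 (ih _ ?_ (mul_mem hσN hγ) rfl)
    zify at hn ⊢
    rwa [← hn]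
  have hTN := T_mem_Gamma0 N
  have hUN := lowerUnipotent_mem_Gamma0 N
  have hN0 : (0 : ℤ) < N := by omega
  obtain h | h | h | h := exists_abs_add_or_sub_lt hN0 (by omega) ha hc
  · apply descend hT hTN
    simpa [Matrix.mul_apply, ModularGroup.coe_T] using mul_lt_mul_of_pos_left h hN0
  · apply descend (inv_mem hT) (inv_mem hTN)
    simpa [Matrix.mul_apply, ModularGroup.coe_T_inv, ← sub_eq_add_neg] using
      mul_lt_mul_of_pos_left h hN0
  · apply descend hU hUN
    simpa [Matrix.mul_apply, coe_lowerUnipotent, add_comm] using h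
  · apply descend (inv_mem hU) (inv_mem hUN)
    simpa [Matrix.mul_apply, coe_lowerUnipotent, Matrix.adjugate_fin_two_of, neg_add_eq_sub] using h

/-- The conjugate `(a, N b; c / N, d)` of `γ ∈ Γ₀(N)` by `diag(N, 1)`; the division is exact. -/
def gamma0ConjMatrix {N : ℕ} (γ : Gamma0 N) : SL(2, ℤ) :=
  ⟨!![γ.1 0 0, N * γ.1 0 1; γ.1 1 0 / N, γ.1 1 1], by
    have hdet := intCast_det_eq_one γ.1 ℤ
    have hc := Int.mul_ediv_cancel' (natCast_dvd_of_mem_Gamma0 γ.2)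
    rw [Matrix.det_fin_two_of]
    linear_combination hdet - γ.1 0 1 * hc⟩

lemma coe_gamma0ConjMatrix {N : ℕ} (γ : Gamma0 N) :
    (gamma0ConjMatrix γ).1 = !![γ.1 0 0, N * γ.1 0 1; γ.1 1 0 / N, γ.1 1 1] := rfl

/-- Conjugation by `diag(N, 1)` as a homomorphism from `Γ₀(N)` to `SL(2, ℤ)`. -/
def gamma0Conj (N : ℕ) [NeZero N] : Gamma0 N →* SL(2, ℤ) where
  toFun := gamma0ConjMatrix
  map_one' := by
    ext i j
    fin_cases i <;> fin_cases j <;> simp [coe_gamma0ConjMatrix]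
  map_mul' γ δ := by
    have hN : (N : ℤ) ≠ 0 := NeZero.ne _
    obtain ⟨e, he⟩ := natCast_dvd_of_mem_Gamma0 γ.2
    obtain ⟨f, hf⟩ := natCast_dvd_of_mem_Gamma0 δ.2
    have hγδ : (γ * δ).1 1 0 = N * (e * δ.1 0 0 + γ.1 1 1 * f) := by
      simp only [Subgroup.coe_mul, Matrix.SpecialLinearGroup.coe_mul, Matrix.mul_apply,
        Fin.sum_univ_two, he, hf]
      ring
    apply Matrix.SpecialLinearGroup.ext
    intro i j
    rw [Matrix.SpecialLinearGroup.coe_mul, coe_gamma0ConjMatrix, coe_gamma0ConjMatrix,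
      coe_gamma0ConjMatrix, hγδ, he, hf]
    simp only [Int.mul_ediv_cancel_left _ hN]
    fin_cases i <;> fin_cases j <;> simp [Matrix.mul_apply, he, hf] <;> ring

lemma coe_T_smul (z : ℍ) : ((T • z : ℍ) : ℂ) = z + 1 := by
  rw [UpperHalfPlane.modular_T_smul, UpperHalfPlane.coe_vadd, ofReal_one, add_comm]

lemma coe_lowerUnipotent_smul (n : ℤ) (z : ℍ) :
    ((lowerUnipotent n • z : ℍ) : ℂ) = z / (n * z + 1) := by
  rw [UpperHalfPlane.coe_specialLinearGroup_apply]
  simp [coe_lowerUnipotent]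

theorem smul_eq_char_mul_of_generators {N : ℕ} (hN : 1 < N) (hN' : N < 4) {f : ℍ → ℂ}
    {χ : Gamma0 N →* ℂ} (hneg : χ ⟨-1, neg_one_mem_Gamma0 N⟩ = 1)
    (hT : ∀ z, f (T • z) = χ ⟨T, T_mem_Gamma0 N⟩ * f z)
    (hU : ∀ z, f (lowerUnipotent N • z) =
      χ ⟨lowerUnipotent N, lowerUnipotent_mem_Gamma0 N⟩ * f z)
    (γ : Gamma0 N) (z : ℍ) : f (γ.1 • z) = χ γ * f z := by
  obtain ⟨γ, hγ⟩ := γ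
  suffices ∃ hγ : γ ∈ Gamma0 N, ∀ z : ℍ, f (γ • z) = χ ⟨γ, hγ⟩ * f z from this.2 z
  replace hγ := Gamma0_le_closure hN hN' hγ
  induction hγ using Subgroup.closure_induction with
  | mem x hx =>
    obtain rfl | rfl | rfl := hx
    · refine ⟨neg_one_mem_Gamma0 N, fun z ↦ ?_⟩
      rw [hneg, one_mul, ModularGroup.SL_neg_smul, one_smul]
    · exact ⟨T_mem_Gamma0 N, hT⟩
    · exact ⟨lowerUnipotent_mem_Gamma0 N, hU⟩
  | one =>
    have hone : χ ⟨1, one_mem _⟩ = 1 := map_one χ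
    exact ⟨one_mem _, fun z ↦ by rw [one_smul, hone, one_mul]⟩
  | mul x y _ _ hx hy =>
    obtain ⟨hxN, hx⟩ := hx
    obtain ⟨hyN, hy⟩ := hy
    refine ⟨mul_mem hxN hyN, fun z ↦ ?_⟩
    rw [mul_smul, hx, hy, ← mul_assoc, ← map_mul, MulMemClass.mk_mul_mk]
  | inv x _ hx =>
    obtain ⟨hxN, hx⟩ := hx
    refine ⟨inv_mem hxN, fun z ↦ ?_⟩
    have hχ : χ ⟨x⁻¹, inv_mem hxN⟩ * χ ⟨x, hxN⟩ = 1 := by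
      rw [← map_mul, MulMemClass.mk_mul_mk, ← map_one χ]
      exact congrArg χ (Subtype.ext (inv_mul_cancel x))
    have hxz := hx (x⁻¹ • z)
    rw [smul_inv_smul] at hxz
    rw [hxz, ← mul_assoc, hχ, one_mul]

/-! ### Eta ratios -/

lemma dedekindEta_eq_eta (z : ℂ) : dedekindEta z = ModularForm.eta z := by
  simp only [dedekindEta, ModularForm.eta, ModularForm.eta_q_eq_cexp, Function.Periodic.qParam,
    ofReal_ofNat]
  congr 2
  ring

lemma dedekindEta_ne_zero_s19 {z : ℂ} (hz : 0 < z.im) : dedekindEta z ≠ 0 :=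
  dedekindEta_eq_eta z ▸ ModularForm.eta_ne_zero hz

lemma dedekindEta_add_natCast (z : ℂ) (n : ℕ) :
    dedekindEta (z + n) = exp (Real.pi * I * n / 12) * dedekindEta z := by
  have hfactor (j : ℕ) :
      exp (2 * Real.pi * I * (j + 1) * (z + n)) = exp (2 * Real.pi * I * (j + 1) * z) := by
    rw [show 2 * Real.pi * I * (j + 1) * (z + n) =
      2 * Real.pi * I * (j + 1) * z + ((j + 1) * n : ℕ) * (2 * Real.pi * I) by push_cast; ring]
    exact exp_periodic.nat_mul _ _
  simp only [dedekindEta, hfactor]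
  rw [← mul_assoc, ← exp_add]
  ring_nf

lemma dedekindEta_neg_one_div {z : ℂ} (hz : 0 < z.im) :
    dedekindEta (-1 / z) = (sqrt I)⁻¹ * (sqrt z * dedekindEta z) := by
  simpa [dedekindEta_eq_eta] using ModularForm.eta_comp_eq_csqrt_I_inv hz

lemma sqrt_ofReal_mul {r : ℝ} (hr : 0 ≤ r) (z : ℂ) : sqrt (r * z) = sqrt r * sqrt z := by
  obtain rfl | hr' := hr.eq_or_lt
  · simp [sqrt]
  obtain rfl | hz := eq_or_ne z 0
  · simp [sqrt]
  have hrC : (r : ℂ) ≠ 0 := ofReal_ne_zero.2 hr'.ne'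
  rw [sqrt_eq_exp (mul_ne_zero hrC hz), sqrt_eq_exp hrC, sqrt_eq_exp hz, ← exp_add,
    log_ofReal_mul hr' hz, ofReal_log hr, add_div]

/-- The eta quotient `η(N z) / η(z)`. -/
noncomputable def etaRatio (N : ℕ) (z : ℂ) : ℂ := dedekindEta (N * z) / dedekindEta z

lemma im_natCast_mul_pos (N : ℕ) [NeZero N] {z : ℂ} (hz : 0 < z.im) : 0 < (N * z).im := by
  rw [← ofReal_natCast, im_ofReal_mul]
  have := NeZero.pos N
  positivity

lemma etaRatio_ne_zero (N : ℕ) [NeZero N] {z : ℂ} (hz : 0 < z.im) : etaRatio N z ≠ 0 :=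
  div_ne_zero (dedekindEta_ne_zero_s19 (im_natCast_mul_pos N hz)) (dedekindEta_ne_zero_s19 hz)

lemma etaRatio_add_one (N : ℕ) (z : ℂ) :
    etaRatio N (z + 1) = exp (Real.pi * I * (N - 1) / 12) * etaRatio N z := by
  have hden := dedekindEta_add_natCast z 1
  rw [Nat.cast_one] at hden
  rw [etaRatio, etaRatio, mul_add, mul_one, dedekindEta_add_natCast, hden, mul_div_mul_comm,
    ← exp_sub]
  ring_nf

lemma etaRatio_fricke (N : ℕ) [NeZero N] {z : ℂ} (hz : 0 < z.im) :
    etaRatio N (-1 / (N * z)) * etaRatio N z = (sqrt N)⁻¹ := by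
  have hN : (N : ℂ) ≠ 0 := NeZero.ne _
  have hz0 : z ≠ 0 := by rintro rfl; simp at hz
  have hsqrtI : sqrt I ≠ 0 := by simp [sqrt]
  have hsqrtz : sqrt z ≠ 0 := by simp [sqrt, hz0]
  have hsqrt : sqrt (N * z) = sqrt N * sqrt z := sqrt_ofReal_mul N.cast_nonneg z
  have hηz := dedekindEta_ne_zero_s19 hz
  have hηNz := dedekindEta_ne_zero_s19 (im_natCast_mul_pos N hz)
  rw [etaRatio, etaRatio, show (N : ℂ) * (-1 / (N * z)) = -1 / z by field_simp,
    dedekindEta_neg_one_div hz, dedekindEta_neg_one_div (im_natCast_mul_pos N hz),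
    hsqrt]
  field_simp

lemma etaRatio_div_natCast_mul_add_one (N : ℕ) [NeZero N] {z : ℂ} (hz : 0 < z.im) :
    etaRatio N (z / (N * z + 1)) = exp (Real.pi * I * (N - 1) / 12) * etaRatio N z := by
  have hN : (N : ℂ) ≠ 0 := NeZero.ne _
  have hNz := im_natCast_mul_pos N hz
  have hz0 : z ≠ 0 := by rintro rfl; simp at hz
  have hden : N * z + 1 ≠ 0 := by
    intro h
    have him : (N * z).im = 0 := by simpa using congrArg im h
    exact hNz.ne' him
  obtain ⟨w, hw⟩ : ∃ w, w + 1 = -1 / (N * z) := ⟨_, sub_add_cancel _ 1⟩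
  have hw_im : 0 < w.im := by
    have hinv := UpperHalfPlane.im_inv_neg_coe_pos ⟨_, hNz⟩
    rw [inv_neg, inv_eq_one_div, ← neg_div, UpperHalfPlane.coe_mk, ← hw] at hinv
    simpa using hinv
  have hfricke_w : -1 / (N * w) = z / (N * z + 1) := by
    have hw' : w = -(N * z + 1) / (N * z) := by
      rw [eq_sub_of_add_eq hw]
      field_simp
      ring
    rw [hw']
    field_simp
  apply mul_right_cancel₀ (etaRatio_ne_zero N hw_im)
  calc etaRatio N (z / (N * z + 1)) * etaRatio N w
    _ = (sqrt N)⁻¹ := by rw [← hfricke_w, etaRatio_fricke N hw_im]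
    _ = etaRatio N (w + 1) * etaRatio N z := by rw [hw, etaRatio_fricke N hz]
    _ = _ := by rw [etaRatio_add_one]; ring

/-! ### Multipliers of the eta ratios -/

/-- The multiplier of `(η(2τ) / η(τ))²` on `Γ₀(2)`. -/
noncomputable def etaRatioTwoSqChar : Gamma0 2 →* ℂ :=
  (ZMod.stdAddChar (N := 12)).toMonoidHom.comp
    (abelianizationHom.comp (gamma0Conj 2) / abelianizationHom.comp (Gamma0 2).subtype)

lemma etaRatioTwoSqChar_apply (γ : Gamma0 2) :
    etaRatioTwoSqChar γ = ZMod.stdAddChar (N := 12)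
      (abelianizationExponent (gamma0Conj 2 γ) - abelianizationExponent γ) := rfl

/-- The multiplier of `η(3τ) / η(τ)` on `Γ₀(3)`; `Gamma0Map` is the lower right entry modulo 3. -/
noncomputable def etaRatioThreeChar : Gamma0 3 →* ℂ :=
  ((quadraticChar (ZMod 3)).ringHomComp (Int.castRingHom ℂ)).toMonoidHom.comp (Gamma0Map 3) *
    (ZMod.stdAddChar (N := 12)).toMonoidHom.comp
      (abelianizationHom.comp (Gamma0 3).subtype / abelianizationHom.comp (gamma0Conj 3) ^ 4)

lemma etaRatioThreeChar_apply (γ : Gamma0 3) :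
    etaRatioThreeChar γ = (quadraticChar (ZMod 3) (γ.1 1 1) : ℂ) * ZMod.stdAddChar (N := 12)
      (abelianizationExponent γ - 4 • abelianizationExponent (gamma0Conj 3 γ)) := rfl

lemma stdAddChar_twelve_one : ZMod.stdAddChar (1 : ZMod 12) = exp (Real.pi * I / 6) := by
  rw [← Int.cast_one (R := ZMod 12), ZMod.stdAddChar_coe]
  push_cast
  ring_nf

lemma stdAddChar_twelve_six : ZMod.stdAddChar (6 : ZMod 12) = -1 := by
  rw [show (6 : ZMod 12) = (6 : ℤ) by rfl, ZMod.stdAddChar_coe, ← exp_pi_mul_I]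
  push_cast
  ring_nf

lemma etaRatioTwoSqChar_neg_one : etaRatioTwoSqChar ⟨-1, neg_one_mem_Gamma0 2⟩ = 1 := by
  have hneg : abelianizationExponent (gamma0Conj 2 ⟨-1, neg_one_mem_Gamma0 2⟩) =
      abelianizationExponent (-1) := by decide
  rw [etaRatioTwoSqChar_apply, hneg, sub_self, AddChar.map_zero_eq_one]

lemma etaRatioTwoSqChar_T :
    etaRatioTwoSqChar ⟨T, T_mem_Gamma0 2⟩ = ZMod.stdAddChar (1 : ZMod 12) := by
  have hT : abelianizationExponent (gamma0Conj 2 ⟨T, T_mem_Gamma0 2⟩) -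
      abelianizationExponent T = 1 := by decide
  rw [etaRatioTwoSqChar_apply, hT]

lemma etaRatioTwoSqChar_lowerUnipotent :
    etaRatioTwoSqChar ⟨lowerUnipotent 2, lowerUnipotent_mem_Gamma0 2⟩ =
      ZMod.stdAddChar (1 : ZMod 12) := by
  have hU : abelianizationExponent (gamma0Conj 2 ⟨lowerUnipotent 2, lowerUnipotent_mem_Gamma0 2⟩) -
      abelianizationExponent (lowerUnipotent 2) = 1 := by decide
  rw [etaRatioTwoSqChar_apply, hU]

lemma etaRatioThreeChar_neg_one : etaRatioThreeChar ⟨-1, neg_one_mem_Gamma0 3⟩ = 1 := by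
  have hneg : abelianizationExponent (-1) -
      4 • abelianizationExponent (gamma0Conj 3 ⟨-1, neg_one_mem_Gamma0 3⟩) = 6 := by decide
  have hquad : quadraticChar (ZMod 3) (((-1 : SL(2, ℤ)) 1 1 : ℤ) : ZMod 3) = -1 := by decide
  rw [etaRatioThreeChar_apply, hneg, hquad, stdAddChar_twelve_six]
  norm_num

lemma etaRatioThreeChar_T :
    etaRatioThreeChar ⟨T, T_mem_Gamma0 3⟩ = ZMod.stdAddChar (1 : ZMod 12) := by
  have hT : abelianizationExponent T -
      4 • abelianizationExponent (gamma0Conj 3 ⟨T, T_mem_Gamma0 3⟩) = 1 := by decide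
  have hquad : quadraticChar (ZMod 3) ((T 1 1 : ℤ) : ZMod 3) = 1 := by decide
  rw [etaRatioThreeChar_apply, hT, hquad, Int.cast_one, one_mul]

lemma etaRatioThreeChar_lowerUnipotent :
    etaRatioThreeChar ⟨lowerUnipotent 3, lowerUnipotent_mem_Gamma0 3⟩ =
      ZMod.stdAddChar (1 : ZMod 12) := by
  have hU : abelianizationExponent (lowerUnipotent 3) -
      4 • abelianizationExponent (gamma0Conj 3 ⟨lowerUnipotent 3, lowerUnipotent_mem_Gamma0 3⟩) =
        1 := by decide
  have hquad : quadraticChar (ZMod 3) ((lowerUnipotent 3 1 1 : ℤ) : ZMod 3) = 1 := by decide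
  rw [etaRatioThreeChar_apply, hU, hquad, Int.cast_one, one_mul]

theorem etaRatio_two_sq_smul (γ : Gamma0 2) (z : ℍ) :
    etaRatio 2 (γ.1 • z : ℍ) ^ 2 = etaRatioTwoSqChar γ * etaRatio 2 z ^ 2 := by
  have hζ : exp (Real.pi * I * ((2 : ℕ) - 1) / 12) ^ 2 = ZMod.stdAddChar (1 : ZMod 12) := by
    rw [stdAddChar_twelve_one, ← exp_nat_mul]
    push_cast
    ring_nf
  refine smul_eq_char_mul_of_generators (f := fun z ↦ etaRatio 2 z ^ 2) (by simp) (by simp)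
    etaRatioTwoSqChar_neg_one (fun z ↦ ?_) (fun z ↦ ?_) γ z
  · rw [coe_T_smul, etaRatio_add_one, mul_pow, hζ, etaRatioTwoSqChar_T]
  · rw [coe_lowerUnipotent_smul, Int.cast_natCast,
      etaRatio_div_natCast_mul_add_one _ z.im_pos, mul_pow, hζ]
    exact congrArg (· * _) etaRatioTwoSqChar_lowerUnipotent.symm

theorem etaRatio_three_smul (γ : Gamma0 3) (z : ℍ) :
    etaRatio 3 (γ.1 • z : ℍ) = etaRatioThreeChar γ * etaRatio 3 z := by
  have hζ : exp (Real.pi * I * ((3 : ℕ) - 1) / 12) = ZMod.stdAddChar (1 : ZMod 12) := by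
    rw [stdAddChar_twelve_one]
    push_cast
    ring_nf
  refine smul_eq_char_mul_of_generators (f := fun z ↦ etaRatio 3 z) (by simp) (by simp)
    etaRatioThreeChar_neg_one (fun z ↦ ?_) (fun z ↦ ?_) γ z
  · rw [coe_T_smul, etaRatio_add_one, hζ, etaRatioThreeChar_T]
  · rw [coe_lowerUnipotent_smul, Int.cast_natCast,
      etaRatio_div_natCast_mul_add_one _ z.im_pos, hζ]
    exact congrArg (· * _) etaRatioThreeChar_lowerUnipotent.symm

lemma abelianizationExponent_eq_of_dvd {γ : SL(2, ℤ)} (hb : 12 ∣ γ 0 1) (hc : 12 ∣ γ 1 0) :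
    abelianizationExponent γ = 3 * (1 - γ 1 1) := by
  have hb' := (ZMod.intCast_zmod_eq_zero_iff_dvd _ 12).2 hb
  have hc' := (ZMod.intCast_zmod_eq_zero_iff_dvd _ 12).2 hc
  rw [abelianizationExponent, hb', hc', abelianizationPoly]
  ring

lemma abelianizationExponent_gamma0Conj_eq_of_dvd {N : ℕ} [NeZero N] {γ : Gamma0 N}
    (hb : 12 ∣ γ.1 0 1) (hc : 12 * (N : ℤ) ∣ γ.1 1 0) :
    abelianizationExponent (gamma0Conj N γ) = 3 * (1 - γ.1 1 1) :=
  abelianizationExponent_eq_of_dvd (hb.mul_left _)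
    (Int.dvd_div_of_mul_dvd (by rwa [mul_comm]))

lemma etaRatioTwoSqChar_eq_one {γ : Gamma0 2} (hb : 12 ∣ γ.1 0 1) (hc : 24 ∣ γ.1 1 0) :
    etaRatioTwoSqChar γ = 1 := by
  rw [etaRatioTwoSqChar_apply, abelianizationExponent_gamma0Conj_eq_of_dvd hb hc,
    abelianizationExponent_eq_of_dvd hb (dvd_trans (by norm_num) hc), sub_self,
    AddChar.map_zero_eq_one]

lemma etaRatioThreeChar_eq_one {γ : Gamma0 3} (hb : 12 ∣ γ.1 0 1) (hc : 36 ∣ γ.1 1 0)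
    (hd : γ.1 1 1 ≡ 1 [ZMOD 12] ∨ γ.1 1 1 ≡ -1 [ZMOD 12]) : etaRatioThreeChar γ = 1 := by
  have hexp : abelianizationExponent γ - 4 • abelianizationExponent (gamma0Conj 3 γ) =
      3 * (1 - (γ.1 1 1 : ZMod 12)) := by
    rw [abelianizationExponent_gamma0Conj_eq_of_dvd hb hc,
      abelianizationExponent_eq_of_dvd hb (dvd_trans (by norm_num) hc)]
    have h12 : (12 : ZMod 12) = 0 := rfl
    rw [nsmul_eq_mul]
    push_cast
    linear_combination (γ.1 1 1 - 1) * h12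
  rw [etaRatioThreeChar_apply, hexp]
  obtain hd | hd := hd
  all_goals
    have hd₃ := (ZMod.intCast_eq_intCast_iff _ _ 3).2 (hd.of_dvd (by norm_num))
    have hd₁₂ := (ZMod.intCast_eq_intCast_iff _ _ 12).2 hd
  · simp [hd₃, hd₁₂]
  · have hquad : quadraticChar (ZMod 3) (-1 : ℤ) = -1 := by decide
    have hsix : 3 * (1 - ((-1 : ℤ) : ZMod 12)) = 6 := by decide
    rw [hd₃, hd₁₂, hquad, hsix, stdAddChar_twelve_six]
    norm_num

lemma exists_mem_Gamma0_smul_eq {N : ℕ} {a b c d : ℤ} (hdet : a * d - b * c = 1)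
    (hN : (N : ℤ) ∣ c) (z : ℍ) :
    ∃ γ : Gamma0 N, γ.1.1 = !![a, b; c, d] ∧ ((γ.1 • z : ℍ) : ℂ) = (a * z + b) / (c * z + d) := by
  let γ : SL(2, ℤ) := ⟨!![a, b; c, d], by rwa [Matrix.det_fin_two_of]⟩
  refine ⟨⟨γ, (ZMod.intCast_zmod_eq_zero_iff_dvd _ N).2 hN⟩, rfl, ?_⟩
  rw [UpperHalfPlane.coe_specialLinearGroup_apply]
  simp [γ]

variable {a b c d : ℤ} {z : ℂ}

lemma etaRatio_two_sq_moebius (hdet : a * d - b * c = 1) (hb : 12 ∣ b) (hc : 24 ∣ c)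
    (hz : 0 < z.im) :
    etaRatio 2 ((a * z + b) / (c * z + d)) ^ 2 = etaRatio 2 z ^ 2 := by
  obtain ⟨γ, hγ, hγz⟩ := exists_mem_Gamma0_smul_eq (N := 2) hdet
    (dvd_trans (by norm_num) hc) ⟨z, hz⟩
  rw [← hγz, etaRatio_two_sq_smul, etaRatioTwoSqChar_eq_one (by simpa [hγ]) (by simpa [hγ]),
    one_mul]

lemma etaRatio_three_moebius (hdet : a * d - b * c = 1)
    (hd : d ≡ 1 [ZMOD 12] ∨ d ≡ -1 [ZMOD 12]) (hb : 12 ∣ b) (hc : 36 ∣ c) (hz : 0 < z.im) :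
    etaRatio 3 ((a * z + b) / (c * z + d)) = etaRatio 3 z := by
  obtain ⟨γ, hγ, hγz⟩ := exists_mem_Gamma0_smul_eq (N := 3) hdet
    (dvd_trans (by norm_num) hc) ⟨z, hz⟩
  rw [← hγz, etaRatio_three_smul,
    etaRatioThreeChar_eq_one (by simpa [hγ]) (by simpa [hγ]) (by simpa [hγ]), one_mul]

lemma phi1_eq_inv_etaRatio_sq (z : ℂ) : phi1 z = (etaRatio 2 (z / 2) ^ 2)⁻¹ := by
  rw [phi1, etaRatio, Nat.cast_ofNat, mul_div_cancel₀ z two_ne_zero, div_pow, inv_div]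

lemma phi2_eq_etaRatio_sq (z : ℂ) : phi2 z = etaRatio 2 z ^ 2 := by
  rw [phi2, etaRatio, Nat.cast_ofNat, div_pow]

lemma phi3_eq_etaRatio (z : ℂ) : phi3 z = etaRatio 3 (z / 2) := by
  rw [phi3, etaRatio, Nat.cast_ofNat, mul_div_assoc]

lemma phi4_eq_etaRatio (z : ℂ) : phi4 z = etaRatio 3 (2 * z) := by
  rw [phi4, etaRatio, Nat.cast_ofNat, ← mul_assoc]
  norm_num

lemma phi5_eq_etaRatio (z : ℂ) : phi5 z = etaRatio 3 z := rfl

lemma moebius_div_two (a b c d z : ℂ) :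
    (a * z + 2 * b) / (c * z + d) / 2 = (a * (z / 2) + b) / (2 * c * (z / 2) + d) := by
  rw [div_right_comm]
  congr 1 <;> ring

lemma two_mul_moebius (a b c d z : ℂ) :
    2 * ((a * z + b) / (2 * c * z + d)) = (a * (2 * z) + 2 * b) / (c * (2 * z) + d) := by
  rw [← mul_div_assoc]
  congr 1 <;> ring

lemma phi1_moebius (hdet : a * d - b * c = 1) (hb : 24 ∣ b) (hc : 12 ∣ c) (hz : 0 < z.im) :
    phi1 ((a * z + b) / (c * z + d)) = phi1 z := by
  obtain ⟨b, rfl⟩ : 2 ∣ b := dvd_trans (by norm_num) hb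
  have h := etaRatio_two_sq_moebius (a := a) (b := b) (c := 2 * c) (d := d) (z := z / 2)
    (by linarith) (by omega) (by omega) (by simpa using hz)
  push_cast at h ⊢
  rw [phi1_eq_inv_etaRatio_sq, phi1_eq_inv_etaRatio_sq, moebius_div_two, h]

lemma phi2_moebius (hdet : a * d - b * c = 1) (hb : 12 ∣ b) (hc : 24 ∣ c) (hz : 0 < z.im) :
    phi2 ((a * z + b) / (c * z + d)) = phi2 z := by
  rw [phi2_eq_etaRatio_sq, phi2_eq_etaRatio_sq, etaRatio_two_sq_moebius hdet hb hc hz]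

lemma phi3_moebius (hdet : a * d - b * c = 1) (hd : d ≡ 1 [ZMOD 12] ∨ d ≡ -1 [ZMOD 12])
    (hb : 24 ∣ b) (hc : 18 ∣ c) (hz : 0 < z.im) :
    phi3 ((a * z + b) / (c * z + d)) = phi3 z := by
  obtain ⟨b, rfl⟩ : 2 ∣ b := dvd_trans (by norm_num) hb
  have h := etaRatio_three_moebius (a := a) (b := b) (c := 2 * c) (z := z / 2)
    (by linarith) hd (by omega) (by omega) (by simpa using hz)
  push_cast at h ⊢
  rw [phi3_eq_etaRatio, phi3_eq_etaRatio, moebius_div_two, h]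

lemma phi4_moebius (hdet : a * d - b * c = 1) (hd : d ≡ 1 [ZMOD 12] ∨ d ≡ -1 [ZMOD 12])
    (hb : 6 ∣ b) (hc : 72 ∣ c) (hz : 0 < z.im) :
    phi4 ((a * z + b) / (c * z + d)) = phi4 z := by
  obtain ⟨c, rfl⟩ : 2 ∣ c := dvd_trans (by norm_num) hc
  have h := etaRatio_three_moebius (a := a) (b := 2 * b) (c := c) (z := 2 * z)
    (by linarith) hd (by omega) (by omega) (by simpa using hz)
  push_cast at h ⊢
  rw [phi4_eq_etaRatio, phi4_eq_etaRatio, two_mul_moebius, h]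

lemma phi5_moebius (hdet : a * d - b * c = 1) (hd : d ≡ 1 [ZMOD 12] ∨ d ≡ -1 [ZMOD 12])
    (hb : 12 ∣ b) (hc : 36 ∣ c) (hz : 0 < z.im) :
    phi5 ((a * z + b) / (c * z + d)) = phi5 z := by
  rw [phi5_eq_etaRatio, phi5_eq_etaRatio, etaRatio_three_moebius hdet hd hb hc hz]

end

/-- invariance of the eta quotients φ₁,…,φ₅ under the congruence
group K of matrices in SL(2,ℤ) with a ≡ d ≡ ±1 (mod 12), 24 ∣ b, 72 ∣ c. -/
theorem phi_invariant_under_K (a b c d : ℤ) (hdet : a * d - b * c = 1)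
    (had : (a ≡ 1 [ZMOD 12] ∧ d ≡ 1 [ZMOD 12]) ∨ (a ≡ -1 [ZMOD 12] ∧ d ≡ -1 [ZMOD 12]))
    (hb : (24 : ℤ) ∣ b) (hc : (72 : ℤ) ∣ c)
    (τ : ℂ) (hτ : 0 < τ.im) :
    phi1 (((a : ℂ) * τ + b) / ((c : ℂ) * τ + d)) = phi1 τ ∧
    phi2 (((a : ℂ) * τ + b) / ((c : ℂ) * τ + d)) = phi2 τ ∧
    phi3 (((a : ℂ) * τ + b) / ((c : ℂ) * τ + d)) = phi3 τ ∧
    phi4 (((a : ℂ) * τ + b) / ((c : ℂ) * τ + d)) = phi4 τ ∧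
    phi5 (((a : ℂ) * τ + b) / ((c : ℂ) * τ + d)) = phi5 τ := by
  have hd : d ≡ 1 [ZMOD 12] ∨ d ≡ -1 [ZMOD 12] := had.imp And.right And.right
  exact ⟨phi1_moebius hdet hb (dvd_trans (by norm_num) hc) hτ,
    phi2_moebius hdet (dvd_trans (by norm_num) hb) (dvd_trans (by norm_num) hc) hτ,
    phi3_moebius hdet hd hb (dvd_trans (by norm_num) hc) hτ,
    phi4_moebius hdet hd (dvd_trans (by norm_num) hb) hc hτ,
    phi5_moebius hdet hd (dvd_trans (by norm_num) hb) (dvd_trans (by norm_num) hc) hτ⟩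
end
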